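/- arXiv:math/0604519 — 3 statements merged into one kernel-verified Lean document; each statement's English description precedes it below -/
import Mathlib

section
/- Lemma 4.1, case $(2,2,n)$ with $n$ odd: Let $n\ge3$ be odd. If the nonzero complex parameters satisfy $t_{12,2}t_{23,2}=t_{13,n}$, $t_{12,1}t_{23,1}=t_{13,n}$, and $t_{12,1}t_{12,2}t_{23,1}t_{23,2}=t_{13,i}\,t_{13,n-i}$ for all integers $1\le i<n/2$ (i.e. $1\le i\le(n-1)/2$), then $\dim_{\mathbb{C}}A_+(2,2,n;t)=2n$, i.e., the algebra $A_{u+}$ is flat at these parameters. -/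
/-!
Write `s = t₁₂₁ + t₁₂₂`, `d = t₁₂₁ t₁₂₂`, `s' = t₂₃₁ + t₂₃₂`, `d' = t₂₃₁ t₂₃₂`, `τ = t₁₃ₙ`,
`n = 2m + 1` and `c = ab`. The hypotheses give `d s' = s τ`, `d d' = τ²`, and say that the roots of
the polynomial `P` of `c` are `τ` and `m` pairs with product `τ²`.

Upper bound: `d d' c⁻¹ = (s' - b)(s - a)` is a polynomial in `c`, because `P(0) ≠ 0`, and
`a c = s c - d s' + d d' c⁻¹ a`. So `ℂ[c] + ℂ[c] a` is a left ideal containing `1`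
(`normalForm_surjective`), and the dimension is at most `2 deg P = 2n` (`finrank_le`).

Lower bound: before `P(c) = 0` is imposed, `z = c + τ² c⁻¹` is central, and since `c² = z c - τ²` the
algebra is free over `ℂ[z]` with basis `1, a, c - τ, (c - τ) a`. Up to a power of `c`, the relation `P(c) = 0` is `(c - τ) Q(z) = 0`,
where `Q` has degree `m`. Because `(c - τ)² = (z - 2τ) c` and
`a (c - τ) = -(c - τ) a + (z - 2τ) a + s (c - τ)`
(here `d s' = s τ` enters), the left ideal generated by `(c - τ) Q` is two-sided, and it equals
`(z - 2τ) Q ⟨1, a⟩ + Q ⟨c - τ, (c - τ) a⟩`. The quotient is therefore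
`(ℂ[w]/(w Q))² × (ℂ[w]/(Q))²` with `w = z - 2τ`, of dimension `2(m + 1) + 2m = 2n`. This module and
the operators `a`, `c` on it are written down explicitly (`modelA`, `modelC`); the relations hold
there, and the vector `1` generates it (`modelSpace_cyclic`), so the presented algebra surjects
onto it.
-/

/-!
Lemma 4.1, case `(2,2,n)` with `n` even. We define `A_+(p,q,r;t)` as the quotient of the free
unital associative `ℂ`-algebra on two generators `a, b` by the two-sided ideal generated by
`∏_{k=1}^{p} (a - t₁₂ₖ)`, `∏_{k=1}^{q} (b - t₂₃ₖ)` and `∏_{k=1}^{r} (ab - t₁₃ₖ)`.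
Flatness at these parameters means `dim_ℂ A_+(2,2,n;t) = 2n`.
-/

noncomputable section

open Polynomial

namespace Rank3

/-- The generator `a`. -/
def a : FreeAlgebra ℂ (Fin 2) := FreeAlgebra.ι ℂ 0

/-- The generator `b`. -/
def b : FreeAlgebra ℂ (Fin 2) := FreeAlgebra.ι ℂ 1

/-- The relations of `A_+(p,q,r;t)`: the minimal polynomial relations for `a`, `b` and `ab`. -/
inductive Rel (p q r : ℕ) (t12 t23 t13 : ℕ → ℂ) :
    FreeAlgebra ℂ (Fin 2) → FreeAlgebra ℂ (Fin 2) → Prop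
  | ra : Rel p q r t12 t23 t13
      (aeval a (∏ k ∈ Finset.Icc 1 p, (X - C (t12 k)))) 0
  | rb : Rel p q r t12 t23 t13
      (aeval b (∏ k ∈ Finset.Icc 1 q, (X - C (t23 k)))) 0
  | rab : Rel p q r t12 t23 t13
      (aeval (a * b) (∏ k ∈ Finset.Icc 1 r, (X - C (t13 k)))) 0

/-- The algebra `A_+(p,q,r;t)`. -/
abbrev Aplus (p q r : ℕ) (t12 t23 t13 : ℕ → ℂ) : Type :=
  RingQuot (Rel p q r t12 t23 t13)

end Rank3

namespace Rank3

/-! ### The upper bound -/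

/-- Pairing `i` with `2m + 1 - i` in a product over `1, …, 2m + 1`. -/
lemma prod_Icc_odd {M : Type*} [CommMonoid M] (f : ℕ → M) (m : ℕ) :
    ∏ k ∈ Finset.Icc 1 (2 * m + 1), f k =
      f (2 * m + 1) * ∏ i ∈ Finset.range m, f (i + 1) * f (2 * m + 1 - (i + 1)) := by
  have h : Finset.Icc 1 (2 * m + 1) = Finset.Ico 1 (2 * m + 1 + 1) := by
    ext; simp
  rw [h, Finset.prod_Ico_eq_prod_range, Nat.add_sub_cancel, Finset.prod_range_succ, mul_comm,
    two_mul, Finset.prod_range_add, Finset.prod_mul_distrib, add_comm 1]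
  congr 2
  · exact Finset.prod_congr rfl fun i _ => by rw [add_comm]
  · rw [← Finset.prod_range_reflect]
    refine Finset.prod_congr rfl fun i hi => ?_
    have := Finset.mem_range.1 hi
    congr 1
    omega

section Upper

variable {A : Type*} [Ring A] [Algebra ℂ A]

/-- The map `(f, g) ↦ f(c) + g(c) a`. -/
def normalForm (a c : A) : (ℂ[X] × ℂ[X]) →ₗ[ℂ] A :=
  ((aeval c).toLinearMap).coprod (LinearMap.mulRight ℂ a ∘ₗ (aeval c).toLinearMap)

lemma normalForm_apply (a c : A) (f g : ℂ[X]) :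
    normalForm a c (f, g) = aeval c f + aeval c g * a := by
  simp [normalForm]

lemma conj_mul_self {a : A} {s d : ℂ} (ha : a * a = s • a - d • (1 : A)) :
    (s • (1 : A) - a) * a = d • (1 : A) := by
  rw [sub_mul, ha, smul_mul_assoc, one_mul]; abel

lemma self_mul_conj {a : A} {s d : ℂ} (ha : a * a = s • a - d • (1 : A)) :
    a * (s • (1 : A) - a) = d • (1 : A) := by
  rw [mul_sub, ha, mul_smul_comm, mul_one]; abel

/-- If `P(c) = 0` with `P(0) ≠ 0` for `c = ab`, then `d d' c⁻¹ = (s' - b)(s - a)` is a polynomial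
in `c`. -/
lemma exists_aeval_eq_conj {a b : A} {s d s' d' : ℂ}
    (ha : a * a = s • a - d • (1 : A)) (hb : b * b = s' • b - d' • (1 : A))
    (P : ℂ[X]) (hP0 : P.coeff 0 ≠ 0) (hP : aeval (a * b) P = 0) :
    ∃ q : ℂ[X], aeval (a * b) q = (s' • (1 : A) - b) * (s • (1 : A) - a) := by
  refine ⟨C (-(d * d') / P.coeff 0) * P.divX, ?_⟩
  have h1 : ((s' • (1 : A) - b) * (s • (1 : A) - a)) * (a * b) = (d * d') • (1 : A) := by
    rw [mul_assoc, ← mul_assoc _ a b, conj_mul_self ha, smul_mul_assoc, one_mul, mul_smul_comm,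
      conj_mul_self hb, smul_smul]
  have h2 : (a * b) * aeval (a * b) P.divX = -(P.coeff 0 • (1 : A)) := by
    have h := congrArg (aeval (a * b)) P.divX_mul_X_add
    rw [mul_comm P.divX X, map_add, map_mul, aeval_X, aeval_C, hP,
      Algebra.algebraMap_eq_smul_one] at h
    exact eq_neg_of_add_eq_zero_left h
  have h3 := congrArg (fun x => ((s' • (1 : A) - b) * (s • (1 : A) - a)) * x) h2
  rw [← mul_assoc, h1, smul_mul_assoc, one_mul, mul_neg, mul_smul_comm, mul_one] at h3
  rw [map_mul, aeval_C, ← Algebra.smul_def, neg_div, neg_smul, div_eq_inv_mul, mul_smul, h3,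
    smul_neg, neg_neg, smul_smul, inv_mul_cancel₀ hP0, one_smul]

/-- The sum `ℂ[c] + ℂ[c] a` is closed under left multiplication by `a` and `b`, hence is the whole
algebra. -/
lemma normalForm_surjective {a b : A} {s d s' d' : ℂ}
    (ha : a * a = s • a - d • (1 : A)) (hb : b * b = s' • b - d' • (1 : A)) (hd : d ≠ 0)
    (hgen : Algebra.adjoin ℂ {a, b} = ⊤)
    (P : ℂ[X]) (hP0 : P.coeff 0 ≠ 0) (hP : aeval (a * b) P = 0) :
    Function.Surjective (normalForm a (a * b)) := by
  obtain ⟨q, hq⟩ := exists_aeval_eq_conj ha hb P hP0 hP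
  set c := a * b with hc
  set N := LinearMap.range (normalForm a c) with hN
  have hKN : ∀ (f : ℂ[X]) (y : A), y ∈ N → aeval c f * y ∈ N := by
    rintro f _ ⟨⟨g, h⟩, rfl⟩
    exact ⟨(f * g, f * h), by simp only [normalForm_apply, map_mul]; rw [mul_add, mul_assoc]⟩
  have hK : ∀ f : ℂ[X], aeval c f ∈ N := fun f => ⟨(f, 0), by simp [normalForm_apply]⟩
  -- the commutation rule moving `a` past `c`, with `q(c) = d d' c⁻¹`
  have hac : a * c = s • c - (d * s') • (1 : A) + aeval c q * a := by
    rw [hq, mul_assoc, conj_mul_self ha, hc, ← mul_assoc, ha, sub_mul, mul_smul_comm, mul_one,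
      smul_sub, smul_smul, smul_mul_assoc, smul_mul_assoc, one_mul]
    abel
  have hapow : ∀ k : ℕ, a * c ^ k ∈ N := by
    intro k
    induction k with
    | zero => exact ⟨(0, 1), by simp [normalForm_apply]⟩
    | succ k ih =>
      rw [pow_succ', ← mul_assoc, hac, add_mul, mul_assoc]
      refine N.add_mem ?_ (hKN q _ ih)
      have := hK ((C s * X - C (d * s')) * X ^ k)
      rwa [map_mul, map_sub, map_mul, aeval_C, aeval_C, aeval_X, map_pow, aeval_X,
        ← Algebra.smul_def, Algebra.algebraMap_eq_smul_one (d * s')] at this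
  have haK : ∀ f : ℂ[X], a * aeval c f ∈ N := by
    intro f
    induction f using Polynomial.induction_on' with
    | add p q hp hq => rw [map_add, mul_add]; exact N.add_mem hp hq
    | monomial k x =>
      rw [aeval_monomial, ← Algebra.smul_def, mul_smul_comm]
      exact N.smul_mem _ (hapow k)
  have hNa : ∀ y ∈ N, y * a ∈ N := by
    rintro _ ⟨⟨f, g⟩, rfl⟩
    refine ⟨(-C d * g, f + C s * g), ?_⟩
    simp only [normalForm_apply]
    rw [add_mul (aeval c f), mul_assoc (aeval c g), ha]
    simp only [map_mul, map_neg, map_add, aeval_C, ← Algebra.smul_def, neg_mul, add_mul, mul_sub,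
      mul_smul_comm, smul_mul_assoc, mul_one]
    abel
  have haN : ∀ y ∈ N, a * y ∈ N := by
    rintro _ ⟨⟨f, g⟩, rfl⟩
    rw [normalForm_apply, mul_add, ← mul_assoc]
    exact N.add_mem (haK f) (hNa _ (haK g))
  have hbN : ∀ y ∈ N, b * y ∈ N := by
    intro y hy
    have hb' : b = d⁻¹ • ((s • (1 : A) - a) * c) := by
      rw [hc, ← mul_assoc, conj_mul_self ha, smul_mul_assoc, one_mul, smul_smul,
        inv_mul_cancel₀ hd, one_smul]
    have hcy : c * y ∈ N := by simpa using hKN X y hy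
    rw [hb', smul_mul_assoc, mul_assoc, sub_mul, smul_mul_assoc, one_mul]
    exact N.smul_mem _ (N.sub_mem (N.smul_mem _ hcy) (haN _ hcy))
  have hall : ∀ x ∈ Algebra.adjoin ℂ {a, b}, ∀ y ∈ N, x * y ∈ N := by
    intro x hx
    induction hx using Algebra.adjoin_induction with
    | mem x hx =>
      rcases hx with rfl | rfl
      · exact haN
      · exact hbN
    | algebraMap r => intro y hy; rw [← Algebra.smul_def]; exact N.smul_mem _ hy
    | add x x' _ _ h h' => intro y hy; rw [add_mul]; exact N.add_mem (h y hy) (h' y hy)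
    | mul x x' _ _ h h' => intro y hy; rw [mul_assoc]; exact h _ (h' y hy)
  intro x
  have h1 : (1 : A) ∈ N := by simpa using hK 1
  have h2 := hall x (hgen ▸ Algebra.mem_top) 1 h1
  rwa [mul_one] at h2

lemma finrank_le {a b : A} {s d s' d' : ℂ}
    (ha : a * a = s • a - d • (1 : A)) (hb : b * b = s' • b - d' • (1 : A)) (hd : d ≠ 0)
    (hgen : Algebra.adjoin ℂ {a, b} = ⊤)
    (P : ℂ[X]) (hPm : P.Monic) (hP0 : P.coeff 0 ≠ 0) (hP : aeval (a * b) P = 0) :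
    Module.Finite ℂ A ∧ Module.finrank ℂ A ≤ 2 * P.natDegree := by
  let D := degreeLT ℂ P.natDegree
  let Φ : (D × D) →ₗ[ℂ] A := normalForm a (a * b) ∘ₗ (D.subtype.prodMap D.subtype)
  have hmod : ∀ f : ℂ[X], f %ₘ P ∈ D ∧ aeval (a * b) (f %ₘ P) = aeval (a * b) f := by
    intro f
    constructor
    · rw [mem_degreeLT, ← degree_eq_natDegree hPm.ne_zero]
      exact degree_modByMonic_lt f hPm
    · conv_rhs => rw [← modByMonic_add_div f P]
      rw [map_add, map_mul, hP, zero_mul, add_zero]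
  have hΦ : Function.Surjective Φ := by
    intro x
    obtain ⟨⟨f, g⟩, rfl⟩ := normalForm_surjective ha hb hd hgen P hP0 hP x
    refine ⟨(⟨f %ₘ P, (hmod f).1⟩, ⟨g %ₘ P, (hmod g).1⟩), ?_⟩
    simp [Φ, normalForm_apply, (hmod f).2, (hmod g).2]
  have e : D ≃ₗ[ℂ] (Fin P.natDegree → ℂ) := degreeLTEquiv ℂ _
  have : Module.Finite ℂ D := Module.Finite.equiv e.symm
  have hD : Module.finrank ℂ D = P.natDegree := by simp [e.finrank_eq]
  refine ⟨Module.Finite.of_surjective Φ hΦ, ?_⟩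
  have := LinearMap.finrank_le_finrank_of_surjective hΦ
  rwa [Module.finrank_prod, hD, ← two_mul] at this

end Upper

/-! ### Recovering `b` and the polynomial relation for `ab` -/

section Relations

variable {B : Type*} [Ring B] [Algebra ℂ B]

/-- From `a`, `c` and the element `z = c + τ² c⁻¹` commuting with `a`, the second generator is
`b = a⁻¹ c`. The last identity says that `z` lies in the subalgebra generated by `a` and `b`. -/
lemma second_generator {a c z : B} {s d s' d' τ : ℂ} (hza : z * a = a * z)
    (hs : d * s' = s * τ) (hdd : d * d' = τ ^ 2) (hd : d ≠ 0)
    (ha : a * a = s • a - d • (1 : B)) (hc : c * c = z * c - τ ^ 2 • (1 : B))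
    (hac : a * c + c * a = s • c + z * a - (s * τ) • (1 : B)) :
    ∃ b : B, a * b = c ∧ b * b = s' • b - d' • (1 : B) ∧
      z = c + (s' • (1 : B) - b) * (s • (1 : B) - a) := by
  obtain ⟨e, he⟩ : ∃ e, e = s • (1 : B) - a := ⟨_, rfl⟩
  have hea : e * a = d • (1 : B) := he ▸ conj_mul_self ha
  have hae : a * e = d • (1 : B) := he ▸ self_mul_conj ha
  have hez : e * z = z * e := by
    rw [he, sub_mul, mul_sub, hza, smul_mul_assoc, one_mul, mul_smul_comm, mul_one]
  have hce : c * e = (s * τ) • (1 : B) - z * a + a * c := by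
    have : c * a = s • c + z * a - (s * τ) • (1 : B) - a * c := by rw [← hac]; abel
    rw [he, mul_sub, this, mul_smul_comm, mul_one]; abel
  have hece : e * c * e = (s * τ) • e - d • z + d • c := by
    rw [mul_assoc, hce, mul_add, mul_sub, ← mul_assoc, hez, mul_assoc, hea, ← mul_assoc, hea]
    simp
  have hdi : d⁻¹ * d = 1 := inv_mul_cancel₀ hd
  refine ⟨d⁻¹ • (e * c), ?_, ?_, ?_⟩
  · rw [mul_smul_comm, ← mul_assoc, hae, smul_mul_assoc, one_mul, smul_smul, hdi, one_smul]
  · rw [smul_mul_smul_comm, ← mul_assoc, hece, add_mul, sub_mul, smul_mul_assoc, smul_mul_assoc,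
      smul_mul_assoc, hc]
    match_scalars
    · field_simp
      linear_combination -hs
    · field_simp
      ring
    · field_simp
      linear_combination hdd
  · rw [← he, sub_mul, smul_mul_assoc, smul_mul_assoc, one_mul, hece]
    match_scalars
    · field_simp
    · field_simp
      ring
    · field_simp
      linear_combination -hs

/-- Each factor with `u v = D` satisfies `(c - u)(c - v) = (ζ - (u + v)) c` when `c² = ζ c - D`. -/
lemma aeval_prod_pairs {Z : Type*} [CommRing Z] [Algebra ℂ Z] [Algebra Z B] [IsScalarTower ℂ Z B]
    {c : B} {ζ : Z} {D : ℂ} (hc : c * c = algebraMap Z B ζ * c - D • (1 : B))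
    (u v : ℕ → ℂ) (m : ℕ) (huv : ∀ i < m, u i * v i = D) :
    aeval c (∏ i ∈ Finset.range m, (X - C (u i)) * (X - C (v i))) =
      (∏ i ∈ Finset.range m, (ζ - algebraMap ℂ Z (u i + v i))) • c ^ m := by
  induction m with
  | zero => simp
  | succ m ih =>
    have h : aeval c ((X - C (u m)) * (X - C (v m))) = (ζ - algebraMap ℂ Z (u m + v m)) • c := by
      have : (X - C (u m)) * (X - C (v m)) = X * X - C (u m + v m) * X + C D := by
        rw [← huv m (by omega)]; simp only [map_add, map_mul]; ring
      rw [this]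
      simp only [map_add, map_sub, map_mul, aeval_X, aeval_C, hc, Algebra.smul_def,
        mul_one, ← IsScalarTower.algebraMap_apply]
      rw [sub_mul]
      abel
    rw [Finset.prod_range_succ, map_mul, ih fun i hi => huv i (by omega), h,
      Finset.prod_range_succ, smul_mul_smul_comm, ← pow_succ]

end Relations

/-! ### The model of the regular representation -/

section Model

variable {Z U U' : Type*} [CommRing Z] [Algebra ℂ Z]
  [AddCommGroup U] [Module Z U] [AddCommGroup U'] [Module Z U']

/-- Left multiplication by `c` in the coordinates `((x₀, x₂), (x₁, x₃))` of
`x₀ + x₂ a + x₁ (c - τ) + x₃ (c - τ) a`. The even coordinates live in `U`, the odd ones in `U'`;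
the element `w` stands for `c + τ² c⁻¹ - 2 τ`, `π` is the reduction
of coefficients and `ι` is multiplication by `w`. -/
def modelC (τ : ℂ) (w : Z) (π : U →ₗ[Z] U') (ι : U' →ₗ[Z] U) :
    Module.End Z ((U × U) × (U' × U')) where
  toFun x := ((algebraMap ℂ Z τ • x.1.1 + algebraMap ℂ Z τ • ι x.2.1,
      algebraMap ℂ Z τ • x.1.2 + algebraMap ℂ Z τ • ι x.2.2),
    (π x.1.1 + (w + algebraMap ℂ Z τ) • x.2.1, π x.1.2 + (w + algebraMap ℂ Z τ) • x.2.2))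
  map_add' x y := by ext <;> simp <;> module
  map_smul' r x := by ext <;> simp <;> module

/-- Left multiplication by `a` in the same coordinates, with `a² = s a - d`. -/
def modelA (s d : ℂ) (ι : U' →ₗ[Z] U) :
    Module.End Z ((U × U) × (U' × U')) where
  toFun x := ((-(algebraMap ℂ Z d • x.1.2) - algebraMap ℂ Z d • ι x.2.2,
      x.1.1 + algebraMap ℂ Z s • x.1.2 + ι x.2.1 + algebraMap ℂ Z s • ι x.2.2),
    (algebraMap ℂ Z s • x.2.1 + algebraMap ℂ Z d • x.2.2, -x.2.1))
  map_add' x y := by ext <;> simp <;> module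
  map_smul' r x := by ext <;> simp <;> module

variable {s d τ : ℂ} {w : Z} {π : U →ₗ[Z] U'} {ι : U' →ₗ[Z] U}

lemma modelA_sq :
    modelA s d ι * modelA s d ι = algebraMap ℂ Z s • modelA s d ι - algebraMap ℂ Z d • 1 := by
  refine LinearMap.ext fun x => ?_
  ext <;> simp [modelA] <;> module

lemma modelC_sq (hπι : ∀ u, π (ι u) = w • u) (hιπ : ∀ u, ι (π u) = w • u) :
    modelC τ w π ι * modelC τ w π ι =
      (w + 2 * algebraMap ℂ Z τ) • modelC τ w π ι - (algebraMap ℂ Z τ) ^ 2 • 1 := by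
  refine LinearMap.ext fun x => ?_
  ext <;> simp [modelC, hπι, hιπ] <;> module

lemma modelA_mul_modelC (hπι : ∀ u, π (ι u) = w • u) (hιπ : ∀ u, ι (π u) = w • u) :
    modelA s d ι * modelC τ w π ι + modelC τ w π ι * modelA s d ι =
      algebraMap ℂ Z s • modelC τ w π ι + (w + 2 * algebraMap ℂ Z τ) • modelA s d ι
        - (algebraMap ℂ Z s * algebraMap ℂ Z τ) • 1 := by
  refine LinearMap.ext fun x => ?_
  ext <;> simp [modelC, modelA, hπι, hιπ] <;> module

end Model

/-! ### The coordinate modules -/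

section Concrete

variable {R : Type*} [CommRing R] (x q : R)

/-- The reduction map `R/(xq) → R/(q)`. -/
def quotPi : (R ⧸ Ideal.span {x * q}) →ₗ[R] (R ⧸ Ideal.span {q}) :=
  Submodule.mapQ (Ideal.span {x * q}) (Ideal.span {q}) LinearMap.id <| by
    rw [Submodule.comap_id, Ideal.span_singleton_le_span_singleton]
    exact Dvd.intro_left x rfl

/-- Multiplication by `x` as a map `R/(q) → R/(xq)`. -/
def quotIota : (R ⧸ Ideal.span {q}) →ₗ[R] (R ⧸ Ideal.span {x * q}) :=
  Submodule.mapQ (Ideal.span {q}) (Ideal.span {x * q}) (LinearMap.lsmul R R x) <| by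
    rw [Ideal.span_le, Set.singleton_subset_iff]
    exact Ideal.mem_span_singleton_self (x * q)

lemma quotPi_mk (p : R) : quotPi x q (Ideal.Quotient.mk _ p) = Ideal.Quotient.mk _ p := rfl
lemma quotIota_mk (p : R) : quotIota x q (Ideal.Quotient.mk _ p) = Ideal.Quotient.mk _ (x * p) := rfl

lemma quotPi_iota (u) : quotPi x q (quotIota x q u) = x • u := by
  obtain ⟨p, rfl⟩ := Ideal.Quotient.mk_surjective u
  rfl

lemma quotIota_pi (u) : quotIota x q (quotPi x q u) = x • u := by
  obtain ⟨p, rfl⟩ := Ideal.Quotient.mk_surjective u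
  rfl
lemma smul_quot_eq_zero (u : R ⧸ Ideal.span {q}) : q • u = 0 := by
  obtain ⟨p, rfl⟩ := Ideal.Quotient.mk_surjective u
  rw [Algebra.smul_def, Ideal.Quotient.algebraMap_eq, ← map_mul, Ideal.Quotient.eq_zero_iff_mem]
  exact Ideal.mul_mem_right _ _ (Ideal.mem_span_singleton_self q)

/-- The module `(R/(xq))² × (R/(q))²` on which `modelA` and `modelC` act; here `x` plays the role
of `w`. -/
abbrev ModelSpace : Type _ :=
  ((R ⧸ Ideal.span {x * q}) × (R ⧸ Ideal.span {x * q})) ×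
    ((R ⧸ Ideal.span {q}) × (R ⧸ Ideal.span {q}))

variable [Algebra ℂ R]

/-- The relation `q (c - τ) = 0`, the central factor of the polynomial relation for `c`. -/
lemma smul_modelC_sub (τ : ℂ) :
    q • (modelC τ x (quotPi x q) (quotIota x q) - algebraMap ℂ R τ • 1) = 0 := by
  have h (u) : q • quotIota x q u = 0 := by rw [← map_smul, smul_quot_eq_zero, map_zero]
  refine LinearMap.ext fun y => ?_
  ext <;> simp only [modelC, LinearMap.smul_apply, LinearMap.sub_apply, LinearMap.coe_mk,
    AddHom.coe_mk, Module.End.one_apply, Prod.smul_fst, Prod.smul_snd, Prod.fst_sub, Prod.snd_sub,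
    LinearMap.zero_apply, Prod.fst_zero, Prod.snd_zero, smul_quot_eq_zero, add_sub_cancel_left]
  · rw [smul_comm, h, smul_zero]
  · rw [smul_comm, h, smul_zero]

/-- The vector `1` generates: `((u₀, u₂), (u₁, u₃))` is the image of `1` under
`u₀ + u₂ a + u₁ (c - τ) + u₃ (c - τ) a`. -/
lemma modelSpace_cyclic {s d τ : ℂ} (S : Subalgebra ℂ (Module.End R (ModelSpace x q)))
    (ha : modelA s d (quotIota x q) ∈ S) (hc : modelC τ x (quotPi x q) (quotIota x q) ∈ S)
    (hp : ∀ p, algebraMap R (Module.End R (ModelSpace x q)) p ∈ S) (v : ModelSpace x q) :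
    ∃ T ∈ S, T ((1, 0), (0, 0)) = v := by
  obtain ⟨⟨u0, u2⟩, ⟨u1, u3⟩⟩ := v
  obtain ⟨p0, rfl⟩ := Ideal.Quotient.mk_surjective u0
  obtain ⟨p1, rfl⟩ := Ideal.Quotient.mk_surjective u1
  obtain ⟨p2, rfl⟩ := Ideal.Quotient.mk_surjective u2
  obtain ⟨p3, rfl⟩ := Ideal.Quotient.mk_surjective u3
  have hc' := S.sub_mem hc (hp (algebraMap ℂ R τ))
  have h1 : quotPi x q 1 = 1 := quotPi_mk x q 1
  refine ⟨_, S.add_mem (S.add_mem (hp p0) (S.mul_mem (hp p2) ha))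
    (S.add_mem (S.mul_mem (hp p1) hc') (S.mul_mem (hp p3) (S.mul_mem hc' ha))), ?_⟩
  ext <;> simp [modelA, modelC, Module.algebraMap_end_apply, h1, Algebra.smul_def]

lemma finrank_modelSpace (Q : ℂ[X]) (hQ : Q.Monic) :
    Module.finrank ℂ (ModelSpace X Q) = 2 * (2 * Q.natDegree + 1) := by
  have h1 : Module.Finite ℂ (ℂ[X] ⧸ Ideal.span {Q}) := hQ.finite_quotient
  have h2 : Module.Finite ℂ (ℂ[X] ⧸ Ideal.span {X * Q}) := (monic_X.mul hQ).finite_quotient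
  rw [Module.finrank_prod, Module.finrank_prod, Module.finrank_prod,
    finrank_quotient_span_eq_natDegree, finrank_quotient_span_eq_natDegree,
    natDegree_mul X_ne_zero hQ.ne_zero, natDegree_X]
  ring

end Concrete

/-! ### The presented algebra -/

section Presentation

variable {p q r : ℕ} {t12 t23 t13 : ℕ → ℂ}

/-- The class in `A_+(p,q,r;t)` of an element of the free algebra. -/
def gen (x : FreeAlgebra ℂ (Fin 2)) : Aplus p q r t12 t23 t13 :=
  RingQuot.mkAlgHom ℂ (Rel p q r t12 t23 t13) x

lemma adjoin_gen : Algebra.adjoin ℂ {(gen a : Aplus p q r t12 t23 t13), gen b} = ⊤ := by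
  have h := congrArg (Subalgebra.map (RingQuot.mkAlgHom ℂ (Rel p q r t12 t23 t13)))
    (FreeAlgebra.adjoin_range_ι (R := ℂ) (X := Fin 2))
  rw [Algebra.map_top, (AlgHom.range_eq_top _).2 (RingQuot.mkAlgHom_surjective ℂ _),
    AlgHom.map_adjoin] at h
  rw [← h]
  congr 1
  ext x
  simp [gen, a, b, Fin.exists_fin_two, eq_comm]

lemma aeval_gen_eq_zero {x : FreeAlgebra ℂ (Fin 2)} {f : ℂ[X]}
    (h : Rel p q r t12 t23 t13 (aeval x f) 0) :
    aeval (gen x : Aplus p q r t12 t23 t13) f = 0 := by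
  have := RingQuot.mkAlgHom_rel ℂ h
  rwa [map_zero, ← aeval_algHom_apply] at this

/-- The universal property of `A_+(p,q,r;t)`. -/
lemma exists_lift {B : Type*} [Ring B] [Algebra ℂ B] (a' b' : B)
    (ha : aeval a' (∏ k ∈ Finset.Icc 1 p, (X - C (t12 k))) = 0)
    (hb : aeval b' (∏ k ∈ Finset.Icc 1 q, (X - C (t23 k))) = 0)
    (hab : aeval (a' * b') (∏ k ∈ Finset.Icc 1 r, (X - C (t13 k))) = 0) :
    ∃ ρ : Aplus p q r t12 t23 t13 →ₐ[ℂ] B, ρ (gen a) = a' ∧ ρ (gen b) = b' := by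
  let φ : FreeAlgebra ℂ (Fin 2) →ₐ[ℂ] B := FreeAlgebra.lift ℂ ![a', b']
  have h1 : φ a = a' := by simp [φ, a]
  have h2 : φ b = b' := by simp [φ, b]
  refine ⟨RingQuot.liftAlgHom ℂ ⟨φ, fun x y h => ?_⟩, ?_, ?_⟩
  · cases h <;> rw [map_zero, ← aeval_algHom_apply]
    · rwa [h1]
    · rwa [h2]
    · rwa [map_mul, h1, h2]
  · rw [gen, RingQuot.liftAlgHom_mkAlgHom_apply, h1]
  · rw [gen, RingQuot.liftAlgHom_mkAlgHom_apply, h2]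

lemma aeval_quadratic {B : Type*} [Ring B] [Algebra ℂ B] (x : B) (t : ℕ → ℂ) :
    aeval x (∏ k ∈ Finset.Icc 1 2, (X - C (t k))) = 0 ↔
      x * x = (t 1 + t 2) • x - (t 1 * t 2) • (1 : B) := by
  have h : ∏ k ∈ Finset.Icc 1 2, (X - C (t k)) =
      X * X - (C (t 1 + t 2) * X - C (t 1 * t 2)) := by
    rw [Finset.prod_Icc_succ_top (by norm_num), Finset.Icc_self, Finset.prod_singleton]
    simp only [map_add, map_mul]
    ring
  rw [h, map_sub, sub_eq_zero]
  simp only [map_sub, map_mul, aeval_X, aeval_C, Algebra.smul_def, mul_one]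

end Presentation

lemma finrank_Aplus_odd (m : ℕ) (t12 t23 t13 : ℕ → ℂ)
    (h12 : ∀ k ∈ Finset.Icc 1 2, t12 k ≠ 0)
    (h13 : ∀ k ∈ Finset.Icc 1 (2 * m + 1), t13 k ≠ 0)
    (e1 : t12 2 * t23 2 = t13 (2 * m + 1))
    (e2 : t12 1 * t23 1 = t13 (2 * m + 1))
    (e3 : ∀ i < m, t13 (i + 1) * t13 (2 * m + 1 - (i + 1)) = t13 (2 * m + 1) ^ 2) :
    Module.finrank ℂ (Aplus 2 2 (2 * m + 1) t12 t23 t13) = 2 * (2 * m + 1) := by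
  have hd : t12 1 * t12 2 ≠ 0 := mul_ne_zero (h12 1 (by simp)) (h12 2 (by simp))
  set P : ℂ[X] := ∏ k ∈ Finset.Icc 1 (2 * m + 1), (X - C (t13 k)) with hP
  obtain ⟨hfin, hle⟩ := finrank_le (A := Aplus 2 2 (2 * m + 1) t12 t23 t13)
    ((aeval_quadratic _ t12).1 (aeval_gen_eq_zero Rel.ra))
    ((aeval_quadratic _ t23).1 (aeval_gen_eq_zero Rel.rb)) hd adjoin_gen P
    (monic_prod_X_sub_C _ _)
    (by
      rw [coeff_zero_eq_eval_zero, hP, eval_prod]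
      exact Finset.prod_ne_zero_iff.2 fun k hk => by simpa using h13 k hk)
    (by
      have := aeval_gen_eq_zero (Rel.rab (p := 2) (q := 2) (r := 2 * m + 1) (t12 := t12)
        (t23 := t23) (t13 := t13))
      rwa [gen, map_mul] at this)
  rw [hP, natDegree_finsetProd_X_sub_C_eq_card, Nat.card_Icc, Nat.add_sub_cancel] at hle
  refine le_antisymm hle ?_
  set τ := t13 (2 * m + 1) with hτ
  -- with `w = X`, so that `c + τ² c⁻¹` is `X + 2τ`, the roots of `Q` are the values of
  -- `w` at the root pairs of `P`
  let Q : ℂ[X] := ∏ i ∈ Finset.range m,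
    (X + 2 * C τ - C (t13 (i + 1) + t13 (2 * m + 1 - (i + 1))))
  have hQ' : Q = ∏ i ∈ Finset.range m,
      (X - C (t13 (i + 1) + t13 (2 * m + 1 - (i + 1)) - 2 * τ)) :=
    Finset.prod_congr rfl fun i _ => by simp only [map_sub, map_mul, map_ofNat]; ring
  have hQm : Q.Monic := hQ' ▸ monic_prod_X_sub_C _ _
  have hQd : Q.natDegree = m := by
    rw [hQ', natDegree_finsetProd_X_sub_C_eq_card, Finset.card_range]
  let E := Module.End ℂ[X] (ModelSpace X Q)
  let α : E := modelA (t12 1 + t12 2) (t12 1 * t12 2) (quotIota X Q)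
  let γ : E := modelC τ X (quotPi X Q) (quotIota X Q)
  let ζ : E := algebraMap ℂ[X] E (X + 2 * C τ)
  have hsmul (x : ℂ) (T : E) : algebraMap ℂ ℂ[X] x • T = x • T := algebraMap_smul _ x T
  have hα : α * α = (t12 1 + t12 2) • α - (t12 1 * t12 2) • (1 : E) := by
    rw [← hsmul, ← hsmul]; exact modelA_sq
  have hγ : γ * γ = ζ * γ - τ ^ 2 • (1 : E) := by
    rw [← hsmul, ← Algebra.smul_def, map_pow]
    exact modelC_sq (quotPi_iota X Q) (quotIota_pi X Q)
  have hαγ : α * γ + γ * α =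
      (t12 1 + t12 2) • γ + ζ * α - ((t12 1 + t12 2) * τ) • (1 : E) := by
    rw [← hsmul, ← hsmul, ← Algebra.smul_def, map_mul]
    exact modelA_mul_modelC (quotPi_iota X Q) (quotIota_pi X Q)
  obtain ⟨β, hαβ, hβ, hζ⟩ := second_generator (s' := t23 1 + t23 2) (d' := t23 1 * t23 2)
    (Algebra.commutes _ _)
    (by linear_combination t12 2 * e2 + t12 1 * e1)
    (by linear_combination (t12 2 * t23 2) * e2 + τ * e1)
    hd hα hγ hαγ
  have hPγ : aeval γ P = 0 := by
    rw [hP, prod_Icc_odd, map_mul, aeval_prod_pairs hγ _ _ m e3, mul_smul_comm, ← smul_mul_assoc,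
      map_sub, aeval_X, aeval_C]
    have := smul_modelC_sub X Q τ
    rw [hsmul, ← Algebra.algebraMap_eq_smul_one] at this
    exact (congrArg (· * γ ^ m) this).trans (zero_mul _)
  obtain ⟨ρ, hρa, hρb⟩ := exists_lift (p := 2) (q := 2) (r := 2 * m + 1) (t12 := t12) (t23 := t23)
    (t13 := t13) α β ((aeval_quadratic α t12).2 hα) ((aeval_quadratic β t23).2 hβ)
    (hαβ.symm ▸ hPγ)
  have hαS : α ∈ ρ.range := ⟨_, hρa⟩
  have hβS : β ∈ ρ.range := ⟨_, hρb⟩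
  have hγS : γ ∈ ρ.range := hαβ ▸ ρ.range.mul_mem hαS hβS
  have hconst (x : ℂ) : x • (1 : E) ∈ ρ.range := ρ.range.smul_mem ρ.range.one_mem x
  have hζS : ζ ∈ ρ.range := by
    change algebraMap ℂ[X] E (X + 2 * C τ) ∈ ρ.range
    rw [hζ]
    exact ρ.range.add_mem hγS (ρ.range.mul_mem (ρ.range.sub_mem (hconst _) hβS) (ρ.range.sub_mem (hconst _) hαS))
  have hXS : algebraMap ℂ[X] E X ∈ ρ.range := by
    have h : algebraMap ℂ[X] E X = ζ - (2 * τ) • (1 : E) := by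
      rw [← hsmul, ← Algebra.algebraMap_eq_smul_one, ← map_sub]
      congr 1
      rw [algebraMap_eq, map_mul, map_ofNat, add_sub_cancel_right]
    exact h ▸ ρ.range.sub_mem hζS (hconst _)
  have hpS (p : ℂ[X]) : algebraMap ℂ[X] E p ∈ ρ.range := by
    induction p using Polynomial.induction_on' with
    | add p q hp hq => rw [map_add]; exact ρ.range.add_mem hp hq
    | monomial k r =>
      rw [← C_mul_X_pow_eq_monomial, map_mul, map_pow]
      refine ρ.range.mul_mem ?_ (ρ.range.pow_mem hXS k)
      rw [Algebra.algebraMap_eq_smul_one]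
      exact hsmul r 1 ▸ hconst r
  let ev : Aplus 2 2 (2 * m + 1) t12 t23 t13 →ₗ[ℂ] ModelSpace X Q :=
    { toFun := fun x => ρ x ((1, 0), (0, 0))
      map_add' := fun x y => by rw [map_add]; rfl
      map_smul' := fun x y => by rw [map_smul]; rfl }
  have hev : Function.Surjective ev := by
    intro v
    obtain ⟨_, ⟨x, rfl⟩, hx⟩ := modelSpace_cyclic X Q ρ.range hαS hγS hpS v
    exact ⟨x, hx⟩
  have := LinearMap.finrank_le_finrank_of_surjective hev
  rwa [finrank_modelSpace Q hQm, hQd] at this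

end Rank3

/-- Lemma 4.1, case `(2,2,n)`, `n ≥ 3` odd. -/
theorem lemma_4_1_22n_odd (n : ℕ) (hn3 : 3 ≤ n) (hnodd : Odd n)
    (t12 t23 t13 : ℕ → ℂ)
    (h12 : ∀ k ∈ Finset.Icc 1 2, t12 k ≠ 0)
    (h23 : ∀ k ∈ Finset.Icc 1 2, t23 k ≠ 0)
    (h13 : ∀ k ∈ Finset.Icc 1 n, t13 k ≠ 0)
    (e1 : t12 2 * t23 2 = t13 n)
    (e2 : t12 1 * t23 1 = t13 n)
    (e3 : ∀ i : ℕ, 1 ≤ i → i ≤ (n - 1) / 2 →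
      t12 1 * t12 2 * t23 1 * t23 2 = t13 i * t13 (n - i)) :
    Module.finrank ℂ (Rank3.Aplus 2 2 n t12 t23 t13) = 2 * n := by
  obtain ⟨m, rfl⟩ := hnodd
  refine Rank3.finrank_Aplus_odd m t12 t23 t13 h12 h13 e1 e2 fun i hi => ?_
  rw [← e3 (i + 1) (by omega) (by omega)]
  linear_combination (t12 2 * t23 2) * e2 + t13 (2 * m + 1) * e1
end
end

section
/- Theorem (flatness locus of $\tilde A_+$), case $(2,2,n)$ with $n$ even (pointwise over $\mathbb{C}$): Let $n\ge2$ be even. Then $\dim_{\mathbb{C}}\tilde A_+(2,2,n)=2n$ (i.e., the algebra is flat) if and only if: $(\alpha_2\beta_2)^n\gamma_n^2=1$; $(\alpha_2\beta_2)^k\gamma_n\gamma_k=\gamma_{n-k}$ for all $1\le k\le n-1$; $(\alpha_2\beta_2)^{n/2}\gamma_n\alpha_1=\alpha_1$; and $(\alpha_2\beta_2)^{n/2}\gamma_n\beta_1=\beta_1$. -/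
/-!
Put `q = α₂β₂`, `u = q⁻¹` and `R = ℂ[x, x⁻¹]`. The relations `abc = 1`, `a² = α₁a - α₂` and
`b² = β₁b - β₂` give `b = β₁ - β₂ca` and the commutation rule
`c a c = u a + w(c)` with `w = (β₁/β₂) X - α₁/q` (`b_eq`, `c_a_c`). So before the degree-`n`
relation `p(c) = 0` is imposed the algebra is `R ⊕ R a`, and afterwards it is spanned by the
`cⁱ` and `cⁱ a` with `i < n` (`comb_surjective`); its dimension is at most `2n`.

Multiplying `a p(c)` by `cⁿ` on the left gives `cⁿ a p(c) = Q(c) a + E(c)` for two explicit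
polynomials (`key`), where `Q` is the rescaled reversal of `p` and
`(X² - u) E = (Xⁿ p - Q) w` (`E_spec`). The dimension is `2n` exactly when `p ∣ Q` and `p ∣ E`.

* If the dimension is `2n`, the spanning family is independent, so `Q(c) a + E(c) = 0` forces both
  divisibilities (`dvd_of_finrank`).
* Conversely, over `S = ℂ[X]/(p)`, in which `x` is invertible, the left regular representation of
  `R ⊕ R a` in the right `R`-basis `1, a` gives explicit `2 × 2` matrices satisfying the relations.
  The divisibilities make `p` vanish at the matrix of `c`, and the orbit of the first basis vector
  is all of `S²`, of dimension `2n` (`aeval_matC_eq_zero`, `finrank_of_dvd`).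

Finally `p ∣ Q` means `Q = γₙ p` by comparing degrees, which gives the first two conditions
coefficientwise. Given this, `(X² - u) E = p (Xⁿ - γₙ) w`, so `p ∣ E` means that `X² - u` divides
`(Xⁿ - γₙ) w`, which is congruent to `(u^(n/2) - γₙ) w` modulo `X² - u`. Since `w` has degree at
most one, this amounts to `(u^(n/2) - γₙ) w = 0`, i.e. to the last two conditions
(`conditions_iff`).
-/

/-!
Theorem (flatness locus of `Ã₊`), case `(2,2,n)` with `n` even. `Ã₊(2,2,n)` is the quotient of
the free unital associative `ℂ`-algebra on `a, b, c` by the two-sided ideal generated by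
`abc - 1`, `a² - α₁a + α₂`, `b² - β₁b + β₂` and `cⁿ - γ₁cⁿ⁻¹ + γ₂cⁿ⁻² - ⋯ + (-1)ⁿγₙ`.
Flatness holds iff `dim_ℂ Ã₊(2,2,n) = 2n`.
-/

noncomputable section

namespace Tilde22n

/-- The generator `a`. -/
def a : FreeAlgebra ℂ (Fin 3) := FreeAlgebra.ι ℂ 0
/-- The generator `b`. -/
def b : FreeAlgebra ℂ (Fin 3) := FreeAlgebra.ι ℂ 1
/-- The generator `c`. -/
def c : FreeAlgebra ℂ (Fin 3) := FreeAlgebra.ι ℂ 2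

/-- scalar embedding -/
def κ (z : ℂ) : FreeAlgebra ℂ (Fin 3) := algebraMap ℂ _ z

/-- The relations of `Ã₊(2,2,n)`. -/
inductive Rel (n : ℕ) (α1 α2 β1 β2 : ℂ) (γ : ℕ → ℂ) :
    FreeAlgebra ℂ (Fin 3) → FreeAlgebra ℂ (Fin 3) → Prop
  | rabc : Rel n α1 α2 β1 β2 γ (a * b * c) 1
  | ra : Rel n α1 α2 β1 β2 γ (a ^ 2 - κ α1 * a + κ α2) 0
  | rb : Rel n α1 α2 β1 β2 γ (b ^ 2 - κ β1 * b + κ β2) 0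
  | rc : Rel n α1 α2 β1 β2 γ
      (c ^ n + ∑ k ∈ Finset.Icc 1 n, κ ((-1 : ℂ) ^ k * γ k) * c ^ (n - k)) 0

/-- The algebra `Ã₊(2,2,n)`. -/
abbrev Aplus (n : ℕ) (α1 α2 β1 β2 : ℂ) (γ : ℕ → ℂ) : Type :=
  RingQuot (Rel n α1 α2 β1 β2 γ)

end Tilde22n

open Polynomial

namespace Tilde22n

/-! ### The polynomials `P`, `Q`, `E` -/

/-- The monic polynomial of degree `n` which is imposed on `c`. -/
def P (n : ℕ) (γ : ℕ → ℂ) : ℂ[X] :=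
  X ^ n + ∑ k ∈ Finset.Icc 1 n, C ((-1 : ℂ) ^ k * γ k) * X ^ (n - k)

/-- The polynomial `W k` with `x ^ k * a * x ^ k = u ^ k • a + W k (x)`, whenever
`x * a * x = u • a + w (x)`; see `pow_conj`. -/
def W (u : ℂ) (w : ℂ[X]) : ℕ → ℂ[X]
  | 0 => 0
  | k + 1 => X ^ 2 * W u w k + C (u ^ k) * w

/-- The rescaled reversal `Xⁿ p(u X⁻¹)` of a polynomial `p` of degree at most `n`. -/
def Q (n : ℕ) (u : ℂ) (p : ℂ[X]) : ℂ[X] :=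
  ∑ k ∈ Finset.range (n + 1), C (p.coeff k * u ^ k) * X ^ (n - k)

/-- The polynomial with `xⁿ a p(x) = Q(x) a + E(x)`, whenever `x a x = u a + w(x)`;
see `key`. -/
def E (n : ℕ) (u : ℂ) (w p : ℂ[X]) : ℂ[X] :=
  ∑ k ∈ Finset.range (n + 1), C (p.coeff k) * X ^ (n - k) * W u w k

lemma W_spec (u : ℂ) (w : ℂ[X]) (k : ℕ) :
    (X ^ 2 - C u) * W u w k = (X ^ (2 * k) - C (u ^ k)) * w := by
  induction k with
  | zero => simp [W]
  | succ k ih =>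
    rw [W]
    simp only [C_pow] at ih ⊢
    linear_combination X ^ 2 * ih

lemma E_spec (n : ℕ) (u : ℂ) (w p : ℂ[X]) (hp : p.natDegree ≤ n) :
    (X ^ 2 - C u) * E n u w p = (X ^ n * p - Q n u p) * w := by
  have hp' := p.as_sum_range_C_mul_X_pow' (Nat.lt_succ_of_le hp)
  conv_rhs => rw [hp']
  have hQ : Q n u (∑ i ∈ Finset.range (n + 1), C (p.coeff i) * X ^ i) = Q n u p := by
    rw [← hp']
  rw [hQ, E, Q, Finset.mul_sum, Finset.mul_sum, ← Finset.sum_sub_distrib, Finset.sum_mul]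
  refine Finset.sum_congr rfl fun k hk => ?_
  have hk : k ≤ n := by simpa [Nat.lt_succ_iff] using hk
  obtain ⟨j, rfl⟩ := Nat.exists_eq_add_of_le hk
  have := W_spec u w k
  rw [Nat.add_sub_cancel_left]
  simp only [C_mul]
  linear_combination C (p.coeff k) * X ^ j * this

section Key
variable {B : Type*} [Ring B] [Algebra ℂ B]

lemma pow_conj (u : ℂ) (w : ℂ[X]) (a x : B) (h : x * a * x = u • a + aeval x w) (k : ℕ) :
    x ^ k * a * x ^ k = u ^ k • a + aeval x (W u w k) := by
  induction k with
  | zero => simp [W]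
  | succ k ih =>
    have hc : aeval x (W u w k) * x = x * aeval x (W u w k) := by
      have : aeval x (W u w k * X) = aeval x (X * W u w k) := by rw [mul_comm]
      simpa using this
    calc x ^ (k + 1) * a * x ^ (k + 1) = x * (x ^ k * a * x ^ k) * x := by
          rw [pow_succ' x k]; nth_rw 2 [← pow_succ']; rw [pow_succ]; simp only [mul_assoc]
      _ = u ^ k • (x * a * x) + x * (x * aeval x (W u w k)) := by
          rw [ih, mul_add, add_mul, mul_assoc x (aeval x _) x, hc]; simp
      _ = _ := by
          rw [h, W]
          simp only [map_add, map_mul, aeval_X, aeval_C, ← Algebra.smul_def, smul_add,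
            smul_smul, pow_succ, one_mul, pow_zero, mul_assoc]
          abel

/-- Moving `p(x)` to the left of `a`, with denominators cleared by `xⁿ`. -/
lemma key (n : ℕ) (u : ℂ) (w p : ℂ[X]) (hp : p.natDegree ≤ n) (a x : B)
    (h : x * a * x = u • a + aeval x w) :
    x ^ n * a * aeval x p = aeval x (Q n u p) * a + aeval x (E n u w p) := by
  have hp' := p.as_sum_range_C_mul_X_pow' (Nat.lt_succ_of_le hp)
  conv_lhs => rw [hp']
  rw [E, Q, map_sum, map_sum, map_sum, Finset.mul_sum, Finset.sum_mul, ← Finset.sum_add_distrib]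
  refine Finset.sum_congr rfl fun k hk => ?_
  have hk : k ≤ n := by simpa [Nat.lt_succ_iff] using hk
  obtain ⟨j, rfl⟩ := Nat.exists_eq_add_of_le hk
  have h1 := congrArg (fun z => p.coeff k • (x ^ j * z)) (pow_conj u w a x h k)
  rw [Nat.add_sub_cancel_left]
  simp only [map_mul, aeval_X_pow, aeval_C, ← Algebra.smul_def, smul_mul_assoc,
    mul_smul_comm, mul_add, smul_add, smul_smul] at h1 ⊢
  rw [← h1, add_comm k j, pow_add]
  simp only [mul_assoc]

end Key

/-! ### The numerical form of the divisibility conditions -/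

lemma P_coeff (n : ℕ) (γ : ℕ → ℂ) (k : ℕ) (h1 : 1 ≤ k) (hk : k ≤ n) :
    (P n γ).coeff (n - k) = (-1) ^ k * γ k := by
  simp only [P, coeff_add, coeff_X_pow, finsetSum_coeff, coeff_C_mul]
  rw [Finset.sum_eq_single k]
  · simp; omega
  · intro j hj hjk
    simp at hj
    rw [if_neg (by omega)]; simp
  · intro h; simp at h; omega

lemma P_deg_lt (n : ℕ) (γ : ℕ → ℂ) :
    (∑ k ∈ Finset.Icc 1 n, C ((-1 : ℂ) ^ k * γ k) * X ^ (n - k)).degree < (n : WithBot ℕ) := by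
  refine (Polynomial.degree_sum_le _ _).trans_lt ?_
  refine (Finset.sup_lt_iff (WithBot.bot_lt_coe n)).2 ?_
  intro k hk
  simp at hk
  refine (degree_C_mul_X_pow_le _ _).trans_lt ?_
  exact Nat.cast_lt.2 (by omega)

lemma P_monic (n : ℕ) (γ : ℕ → ℂ) : (P n γ).Monic := monic_X_pow_add (P_deg_lt n γ)

lemma P_natDegree (n : ℕ) (γ : ℕ → ℂ) : (P n γ).natDegree = n := by
  have : (P n γ).degree = n := by
    rw [P, degree_add_eq_left_of_degree_lt] <;> rw [degree_X_pow]
    exact P_deg_lt n γ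
  exact natDegree_eq_of_degree_eq_some this

lemma P_coeff_zero (n : ℕ) (γ : ℕ → ℂ) (hn : 1 ≤ n) (he : Even n) :
    (P n γ).coeff 0 = γ n := by
  have := P_coeff n γ n hn le_rfl
  simpa [he.neg_one_pow] using this

lemma Q_coeff (n : ℕ) (u : ℂ) (p : ℂ[X]) (k : ℕ) (hk : k ≤ n) :
    (Q n u p).coeff (n - k) = p.coeff k * u ^ k := by
  simp only [Q, coeff_X_pow, finsetSum_coeff, coeff_C_mul]
  rw [Finset.sum_eq_single k]
  · simp
  · intro j hj hjk
    simp at hj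
    rw [if_neg (by omega)]; simp
  · intro h; simp at h; omega

lemma Q_natDegree_le (n : ℕ) (u : ℂ) (p : ℂ[X]) : (Q n u p).natDegree ≤ n := by
  refine natDegree_sum_le_of_forall_le _ _ fun k _ => ?_
  exact (natDegree_C_mul_X_pow_le _ _).trans (Nat.sub_le _ _)

/-- For degree reasons `P ∣ Q` only with a constant quotient, which is `γ n` by comparison of the
leading coefficients (`n` is even, so `γ n` is the constant coefficient of `P`). -/
lemma dvd_Q_iff (n : ℕ) (hn : 1 ≤ n) (he : Even n) (u : ℂ) (γ : ℕ → ℂ) :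
    P n γ ∣ Q n u (P n γ) ↔ Q n u (P n γ) = C (γ n) * P n γ := by
  constructor
  · rintro ⟨r, hr⟩
    have hr0 : r.natDegree = 0 := by
      by_cases h : r = 0
      · simp [h]
      have h1 := Q_natDegree_le n u (P n γ)
      rw [hr, (P_monic n γ).natDegree_mul' h, P_natDegree] at h1
      omega
    rw [eq_C_of_natDegree_eq_zero hr0] at hr
    have h1 := Q_coeff n u (P n γ) 0 (Nat.zero_le _)
    have h2 := (P_monic n γ).coeff_natDegree
    rw [P_natDegree] at h2
    rw [hr, P_coeff_zero n γ hn he, coeff_mul_C] at h1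
    simp [h2] at h1
    rw [hr, h1, mul_comm]
  · intro h; exact ⟨_, h.trans (mul_comm _ _)⟩

lemma Q_eq_iff (n : ℕ) (hn : 1 ≤ n) (he : Even n) (q : ℂ) (hq : q ≠ 0) (γ : ℕ → ℂ) :
    Q n q⁻¹ (P n γ) = C (γ n) * P n γ ↔ (q ^ n * γ n ^ 2 = 1 ∧
       (∀ k : ℕ, 1 ≤ k → k ≤ n - 1 → q ^ k * γ n * γ k = γ (n - k))) := by
  have hPn : (P n γ).coeff n = 1 := by
    have h2 := (P_monic n γ).coeff_natDegree
    rwa [P_natDegree] at h2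
  -- the coefficient of degree `n - k`, for `1 ≤ k ≤ n - 1`
  have hmid : ∀ k, 1 ≤ k → k ≤ n - 1 →
      ((Q n q⁻¹ (P n γ)).coeff (n - k) = (C (γ n) * P n γ).coeff (n - k) ↔
        q ^ k * γ n * γ k = γ (n - k)) := by
    intro k h1 h2
    have hs : ((-1 : ℂ)) ^ (n - k) = (-1) ^ k := by
      have : Even (n - k + k) := by rwa [Nat.sub_add_cancel (by omega)]
      rcases neg_one_pow_eq_or ℂ k with h | h <;>
        have := this.neg_one_pow (α := ℂ) <;> rw [pow_add, h] at this <;> rw [h]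
      · simpa using this
      · linear_combination -this
    rw [Q_coeff _ _ _ _ (by omega), coeff_C_mul, P_coeff n γ k h1 (by omega)]
    have h3 := P_coeff n γ (n - k) (by omega) (by omega)
    rw [Nat.sub_sub_self (by omega), hs] at h3
    rw [h3]
    have hne : ((-1 : ℂ)) ^ k ≠ 0 := pow_ne_zero _ (by norm_num)
    have hqk : q ^ k ≠ 0 := pow_ne_zero _ hq
    rw [inv_pow]
    constructor
    · intro h
      field_simp at h
      linear_combination -h
    · intro h
      field_simp
      linear_combination -h
  have hlast : (Q n q⁻¹ (P n γ)).coeff 0 = (C (γ n) * P n γ).coeff 0 ↔ q ^ n * γ n ^ 2 = 1 := by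
    have h := Q_coeff n q⁻¹ (P n γ) n le_rfl
    rw [Nat.sub_self] at h
    rw [h, coeff_C_mul, P_coeff_zero n γ hn he, hPn, inv_pow]
    have hqk : q ^ n ≠ 0 := pow_ne_zero _ hq
    field_simp
    exact eq_comm
  constructor
  · intro h
    exact ⟨hlast.1 (by rw [h]), fun k h1 h2 => (hmid k h1 h2).1 (by rw [h])⟩
  · rintro ⟨h1, h2⟩
    ext i
    rcases Nat.lt_or_ge n i with hi | hi
    · rw [coeff_eq_zero_of_natDegree_lt ((Q_natDegree_le _ _ _).trans_lt hi), coeff_C_mul,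
        coeff_eq_zero_of_natDegree_lt (by rwa [P_natDegree]), mul_zero]
    · rcases Nat.eq_zero_or_pos i with rfl | h0
      · exact hlast.2 h1
      · rcases hi.eq_or_lt with rfl | hi'
        · have := Q_coeff i q⁻¹ (P i γ) 0 (Nat.zero_le _)
          rw [Nat.sub_zero] at this
          rw [this, coeff_C_mul, hPn, P_coeff_zero i γ hn he]
          simp
        · have := (hmid (n - i) (by omega) (by omega)).2 (h2 _ (by omega) (by omega))
          rwa [Nat.sub_sub_self hi] at this

/-- Cancelling `P` from `(X² - u) E = P (Xⁿ - γₙ) w` turns `P ∣ E` into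
`X² - u ∣ (Xⁿ - γₙ) w`, and `Xⁿ ≡ u ^ (n / 2)` modulo `X² - u` because `n` is even. -/
lemma dvd_E_iff (n : ℕ) (he : Even n) (u s t : ℂ) (γ : ℕ → ℂ)
    (hQ : Q n u (P n γ) = C (γ n) * P n γ) :
    P n γ ∣ E n u (C s * X - C t) (P n γ) ↔
      (u ^ (n / 2) - γ n) * s = 0 ∧ (u ^ (n / 2) - γ n) * t = 0 := by
  set w : ℂ[X] := C s * X - C t with hw
  have hE := E_spec n u w (P n γ) (P_natDegree n γ).le
  have hP0 := (P_monic n γ).ne_zero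
  have hd0 : (X ^ 2 - C u : ℂ[X]) ≠ 0 := X_pow_sub_C_ne_zero (by norm_num) u
  obtain ⟨r, hr⟩ : (X ^ 2 - C u : ℂ[X]) ∣ X ^ n - C (u ^ (n / 2)) := by
    have := sub_dvd_pow_sub_pow (X ^ 2 : ℂ[X]) (C u) (n / 2)
    rwa [← pow_mul, Nat.two_mul_div_two_of_even he, ← C_pow] at this
  have h1 : (X ^ 2 - C u) * E n u w (P n γ) =
      P n γ * ((X ^ 2 - C u) * r * w + C (u ^ (n / 2) - γ n) * w) := by
    rw [hE, hQ, ← hr, C_sub]; ring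
  have h2 : P n γ ∣ E n u w (P n γ) ↔ (X ^ 2 - C u) ∣ C (u ^ (n / 2) - γ n) * w := by
    constructor
    · rintro ⟨e, hh⟩
      rw [hh] at h1
      refine ⟨e - r * w, ?_⟩
      apply mul_left_cancel₀ hP0
      linear_combination -h1
    · rintro ⟨e, hh⟩
      refine ⟨e + r * w, ?_⟩
      apply mul_left_cancel₀ hd0
      rw [h1, hh]; ring
  have h3 : (X ^ 2 - C u) ∣ C (u ^ (n / 2) - γ n) * w ↔ C (u ^ (n / 2) - γ n) * w = 0 := by
    refine ⟨fun h => eq_zero_of_dvd_of_degree_lt h ?_, fun h => h ▸ dvd_zero _⟩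
    rw [degree_X_pow_sub_C (by norm_num)]
    refine lt_of_le_of_lt (b := 1) ?_ (by norm_num)
    rw [hw]; compute_degree
  rw [h2, h3]
  constructor
  · intro h
    have e1 := congrArg (fun f => coeff f 1) h
    have e0 := congrArg (fun f => coeff f 0) h
    simp only [hw, coeff_C_mul, coeff_sub, coeff_X_one, coeff_X_zero, coeff_zero, coeff_C_zero,
      mul_one, mul_zero, sub_zero, zero_sub, mul_neg, neg_eq_zero,
      coeff_C_of_ne_zero one_ne_zero] at e1 e0
    exact ⟨e1, e0⟩
  · rintro ⟨h1, h2⟩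
    rw [hw, mul_sub, ← mul_assoc, ← C_mul, ← C_mul, h1, h2]; simp

lemma conditions_iff (n : ℕ) (hn2 : 2 ≤ n) (he : Even n)
    (α1 β1 : ℂ) (α2 β2 : ℂ) (γ : ℕ → ℂ) (hα2 : α2 ≠ 0) (hβ2 : β2 ≠ 0) :
    (P n γ ∣ Q n (α2 * β2)⁻¹ (P n γ) ∧
      P n γ ∣ E n (α2 * β2)⁻¹ (C (β1 / β2) * X - C (α1 / (α2 * β2))) (P n γ)) ↔
      ((α2 * β2) ^ n * γ n ^ 2 = 1 ∧
       (∀ k : ℕ, 1 ≤ k → k ≤ n - 1 → (α2 * β2) ^ k * γ n * γ k = γ (n - k)) ∧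
       (α2 * β2) ^ (n / 2) * γ n * α1 = α1 ∧
       (α2 * β2) ^ (n / 2) * γ n * β1 = β1) := by
  have hq : α2 * β2 ≠ 0 := mul_ne_zero hα2 hβ2
  have hqm : (α2 * β2) ^ (n / 2) ≠ 0 := pow_ne_zero _ hq
  rw [← and_assoc (a := (α2 * β2) ^ n * γ n ^ 2 = 1), ← Q_eq_iff n (by omega) he _ hq,
    dvd_Q_iff n (by omega) he]
  refine and_congr_right fun hQ => ?_
  rw [dvd_E_iff n he _ _ _ _ hQ, and_comm]
  rw [inv_pow]
  generalize (α2 * β2) ^ (n / 2) = z at *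
  -- both equations are cleared of the nonzero factors `z`, `β2` and `α2 * β2`
  have clear : ∀ x y : ℂ, y ≠ 0 → ((z⁻¹ - γ n) * (x / y) = 0 ↔ z * γ n * x = x) := by
    intro x y hy
    constructor
    · intro h
      field_simp at h
      linear_combination -h
    · intro h
      field_simp
      linear_combination -h
  rw [clear _ _ hβ2, clear _ _ hq]

/-! ### The commutation rule and the spanning set -/

section Rels
variable {B : Type*} [Ring B] [Algebra ℂ B]

lemma b_eq {α1 α2 β1 β2 : ℂ} (hα2 : α2 ≠ 0) {a b c : B}
    (habc : a * b * c = 1) (ha : a ^ 2 - α1 • a + α2 • (1 : B) = 0)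
    (hb : b ^ 2 - β1 • b + β2 • (1 : B) = 0) :
    b * c = α2⁻¹ • (α1 • 1 - a) ∧ b = β1 • (1 : B) - β2 • (c * a) := by
  have hinv : (α2⁻¹ • (α1 • (1 : B) - a)) * a = 1 := by
    have : (α1 • (1 : B) - a) * a = α2 • (1 : B) := by
      rw [sub_mul, smul_mul_assoc, one_mul, ← pow_two]
      linear_combination (norm := module) (-1 : ℂ) • ha
    rw [smul_mul_assoc, this, smul_smul, inv_mul_cancel₀ hα2, one_smul]
  have hbc : b * c = α2⁻¹ • (α1 • 1 - a) := by
    have := congrArg (fun z => (α2⁻¹ • (α1 • (1 : B) - a)) * z) habc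
    simpa only [mul_one, ← mul_assoc, hinv, one_mul] using this
  refine ⟨hbc, ?_⟩
  have hbca : b * (c * a) = 1 := by rw [← mul_assoc, hbc, hinv]
  have := congrArg (fun z => z * (c * a)) hb
  simp only [add_mul, sub_mul, smul_mul_assoc, pow_two, mul_assoc, hbca, mul_one, one_mul,
    zero_mul] at this
  linear_combination (norm := module) this

lemma c_a_c {α1 α2 β1 β2 : ℂ} (hα2 : α2 ≠ 0) (hβ2 : β2 ≠ 0) {a b c : B}
    (habc : a * b * c = 1) (ha : a ^ 2 - α1 • a + α2 • (1 : B) = 0)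
    (hb : b ^ 2 - β1 • b + β2 • (1 : B) = 0) :
    c * a * c = (α2 * β2)⁻¹ • a + aeval c (C (β1 / β2) * X - C (α1 / (α2 * β2))) := by
  obtain ⟨hbc, hb'⟩ := b_eq hα2 habc ha hb
  have h : β2 • (c * a * c) = β1 • c - α2⁻¹ • (α1 • 1 - a) := by
    rw [← hbc]
    conv_rhs => rw [hb']
    rw [sub_mul, smul_mul_assoc, smul_mul_assoc, one_mul]
    abel
  have h2 := congrArg (fun z => β2⁻¹ • z) h
  simp only [smul_smul, inv_mul_cancel₀ hβ2, one_smul] at h2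
  rw [h2]
  simp only [map_sub, map_mul, aeval_X, aeval_C, Algebra.algebraMap_eq_smul_one, smul_mul_assoc,
    one_mul, div_eq_mul_inv, mul_inv]
  module

end Rels

/-- The class of `X` in `ℂ[X]/(p)` is invertible if `p(0) ≠ 0`; `y` is `(q X)⁻¹`. -/
lemma exists_inv_root (p : ℂ[X]) (q : ℂ) (hq : q ≠ 0) (hp : p.coeff 0 ≠ 0) :
    ∃ y : AdjoinRoot p, q • (y * AdjoinRoot.root p) = 1 := by
  refine ⟨(-(q * p.coeff 0)⁻¹) • AdjoinRoot.mk p p.divX, ?_⟩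
  have h := congrArg (AdjoinRoot.mk p) p.divX_mul_X_add
  rw [AdjoinRoot.mk_self, map_add, map_mul, AdjoinRoot.mk_X, AdjoinRoot.mk_C] at h
  rw [smul_mul_assoc, eq_neg_of_add_eq_zero_left h, smul_smul, ← AdjoinRoot.algebraMap_eq,
    Algebra.algebraMap_eq_smul_one, ← neg_smul, smul_smul]
  rw [show q * -(q * p.coeff 0)⁻¹ * -p.coeff 0 = 1 by field_simp, one_smul]

section Span
variable {B : Type*} [Ring B] [Algebra ℂ B]

/-- Evaluation `ℂ[X]/(p) → B` at an element `c` with `p(c) = 0`, for noncommutative `B`. -/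
def ev (p : ℂ[X]) (c : B) (hc : aeval c p = 0) : AdjoinRoot p →ₐ[ℂ] B :=
  Ideal.Quotient.liftₐ (Ideal.span {p}) (aeval c) (by
    intro f hf
    obtain ⟨g, rfl⟩ := Ideal.mem_span_singleton.1 hf
    rw [map_mul, hc, zero_mul])

lemma ev_mk (p : ℂ[X]) (c : B) (hc : aeval c p = 0) (f : ℂ[X]) :
    ev p c hc (AdjoinRoot.mk p f) = aeval c f := rfl

lemma ev_root (p : ℂ[X]) (c : B) (hc : aeval c p = 0) :
    ev p c hc (AdjoinRoot.root p) = c := by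
  rw [← AdjoinRoot.mk_X, ev_mk, aeval_X]

/-- The linear map `(f, g) ↦ f(c) + g(c) a` from `(ℂ[X]/(p))²` to `B`. -/
def comb (p : ℂ[X]) (c : B) (hc : aeval c p = 0) (a : B) :
    AdjoinRoot p × AdjoinRoot p →ₗ[ℂ] B :=
  LinearMap.coprod (ev p c hc).toLinearMap
    ((LinearMap.mulRight ℂ a).comp (ev p c hc).toLinearMap)

lemma comb_apply (p : ℂ[X]) (c : B) (hc : aeval c p = 0) (a : B) (f g : AdjoinRoot p) :
    comb p c hc a (f, g) = ev p c hc f + ev p c hc g * a := rfl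

lemma ev_mul_mem {p : ℂ[X]} {c : B} {hc : aeval c p = 0} {a m : B} (s : AdjoinRoot p)
    (hm : m ∈ LinearMap.range (comb p c hc a)) :
    ev p c hc s * m ∈ LinearMap.range (comb p c hc a) := by
  obtain ⟨⟨f, g⟩, rfl⟩ := hm
  exact ⟨(s * f, s * g), by simp only [comb_apply, map_mul, mul_add, mul_assoc]⟩

/-- The span of the `cⁱ` and `cⁱ a` is stable under left multiplication by `a`, because the
commutation rule expresses `a c` as `c⁻¹` times an element of that span. -/
lemma a_mul_mem {p : ℂ[X]} {c : B} {hc : aeval c p = 0} {a m : B} (q α1 α2 : ℂ) (hq : q ≠ 0)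
    (hp : p.coeff 0 ≠ 0) (w : ℂ[X]) (ha : a ^ 2 - α1 • a + α2 • (1 : B) = 0)
    (h : c * a * c = q⁻¹ • a + aeval c w)
    (hm : m ∈ LinearMap.range (comb p c hc a)) :
    a * m ∈ LinearMap.range (comb p c hc a) := by
  have hright : ∀ z ∈ LinearMap.range (comb p c hc a),
      z * a ∈ LinearMap.range (comb p c hc a) := by
    rintro _ ⟨⟨f, g⟩, rfl⟩
    refine ⟨(-α2 • g, f + α1 • g), ?_⟩
    have ha' : a * a = α1 • a - α2 • (1 : B) := by
      rw [← pow_two]; linear_combination (norm := module) ha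
    simp only [comb_apply, map_smul, map_add, add_mul, mul_assoc, ha', mul_sub, mul_smul_comm,
      smul_mul_assoc, mul_one]
    module
  obtain ⟨y, hy⟩ := exists_inv_root p q hq hp
  have hy' : q • (ev p c hc y * c) = 1 := by
    have := congrArg (ev p c hc) hy
    simpa only [map_smul, map_mul, ev_root, map_one] using this
  have hpoly : ∀ f : ℂ[X], a * aeval c f ∈ LinearMap.range (comb p c hc a) := by
    intro f
    induction f using Polynomial.induction_on' with
    | add f g hf hg => rw [map_add, mul_add]; exact add_mem hf hg
    | monomial k r =>
      rw [← C_mul_X_pow_eq_monomial, map_mul, aeval_C, ← Algebra.smul_def, mul_smul_comm]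
      refine Submodule.smul_mem _ _ ?_
      induction k with
      | zero => exact ⟨(0, 1), by simp [comb_apply]⟩
      | succ k ih =>
        have e : a * aeval c (X ^ (k + 1) : ℂ[X]) =
            q • (ev p c hc y * (q⁻¹ • (a * aeval c (X ^ k : ℂ[X])) +
              ev p c hc (AdjoinRoot.mk p (w * X ^ k)))) := by
          calc a * aeval c (X ^ (k + 1) : ℂ[X])
              = (q • (ev p c hc y * c)) * (a * aeval c (X ^ (k + 1) : ℂ[X])) := by
                rw [hy', one_mul]
            _ = q • (ev p c hc y * ((c * a * c) * aeval c (X ^ k : ℂ[X]))) := by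
                simp only [map_pow, map_mul, aeval_X, pow_succ', smul_mul_assoc, mul_assoc]
            _ = _ := by rw [h, ev_mk, map_mul, add_mul, smul_mul_assoc]
        rw [e]
        refine Submodule.smul_mem _ _ (ev_mul_mem _ (add_mem (Submodule.smul_mem _ _ ih) ?_))
        exact ⟨(AdjoinRoot.mk p (w * X ^ k), 0), by simp [comb_apply]⟩
  obtain ⟨⟨f, g⟩, rfl⟩ := hm
  obtain ⟨f, rfl⟩ := AdjoinRoot.mk_surjective f
  obtain ⟨g, rfl⟩ := AdjoinRoot.mk_surjective g
  rw [comb_apply, ev_mk, ev_mk, mul_add, ← mul_assoc]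
  exact add_mem (hpoly f) (hright _ (hpoly g))

end Span

/-! ### The matrix model -/

section Model
variable {S : Type*} [CommRing S] [Algebra ℂ S]

/-- The matrix of left multiplication by `a` in the right basis `1, a`, i.e. the companion matrix
of `X² - α1 X + α2`. -/
def matA (α1 α2 : ℂ) : Matrix (Fin 2) (Fin 2) S :=
  !![0, -algebraMap ℂ S α2; 1, algebraMap ℂ S α1]

/-- The matrix of left multiplication by `c` in the right basis `1, a`, where `c` is `x` and
`y = (α2 β2 x)⁻¹`. -/
def matC (α1 β1 β2 : ℂ) (x y : S) : Matrix (Fin 2) (Fin 2) S :=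
  !![x, algebraMap ℂ S (β1 / β2) - algebraMap ℂ S α1 * y; 0, y]

/-- The matrix of `b = a⁻¹ c⁻¹` in the right basis `1, a`. -/
def matB (α1 α2 β1 β2 : ℂ) (x y : S) : Matrix (Fin 2) (Fin 2) S :=
  algebraMap ℂ S β2 •
    !![algebraMap ℂ S α1 * y, algebraMap ℂ S α2 * x -
        algebraMap ℂ S α1 * (algebraMap ℂ S (β1 / β2) - algebraMap ℂ S α1 * y);
      -y, algebraMap ℂ S (β1 / β2) - algebraMap ℂ S α1 * y]

lemma smul_one_eq (r : ℂ) : r • (1 : Matrix (Fin 2) (Fin 2) S) =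
    !![algebraMap ℂ S r, 0; 0, algebraMap ℂ S r] := by
  ext i j; fin_cases i <;> fin_cases j <;> simp [Algebra.algebraMap_eq_smul_one]

lemma matA_rel (α1 α2 : ℂ) :
    (matA α1 α2 : Matrix (Fin 2) (Fin 2) S) ^ 2 - α1 • matA α1 α2 + α2 • 1 = 0 := by
  rw [← smul_one_mul α1 (matA α1 α2 : Matrix (Fin 2) (Fin 2) S), smul_one_eq, smul_one_eq, pow_two,
    matA]
  generalize algebraMap ℂ S α1 = A1
  generalize algebraMap ℂ S α2 = A2
  ext i j; fin_cases i <;> fin_cases j <;> simp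
  all_goals ring

lemma matB_rel (α1 α2 β1 β2 : ℂ) (hβ2 : β2 ≠ 0) (x y : S)
    (hxy : algebraMap ℂ S (α2 * β2) * (y * x) = 1) :
    matB α1 α2 β1 β2 x y ^ 2 - β1 • matB α1 α2 β1 β2 x y + β2 • 1 = 0 := by
  have hB : algebraMap ℂ S β1 = algebraMap ℂ S β2 * algebraMap ℂ S (β1 / β2) := by
    rw [← map_mul, mul_div_cancel₀ _ hβ2]
  rw [map_mul] at hxy
  rw [← smul_one_mul β1 (matB α1 α2 β1 β2 x y), smul_one_eq, smul_one_eq, pow_two, hB, matB]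
  generalize algebraMap ℂ S (β1 / β2) = t at *
  generalize algebraMap ℂ S α1 = A1 at *
  generalize algebraMap ℂ S α2 = A2 at *
  generalize algebraMap ℂ S β2 = B2 at *
  ext i j
  fin_cases i <;> fin_cases j <;> simp
  · linear_combination (-B2) * hxy
  · ring
  · ring
  · linear_combination (-B2) * hxy

lemma mat_abc (α1 α2 β1 β2 : ℂ) (x y : S)
    (hxy : algebraMap ℂ S (α2 * β2) * (y * x) = 1) :
    matA α1 α2 * matB α1 α2 β1 β2 x y * matC α1 β1 β2 x y = 1 := by
  rw [map_mul] at hxy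
  rw [matA, matB, matC]
  generalize algebraMap ℂ S (β1 / β2) = t at *
  generalize algebraMap ℂ S α1 = A1 at *
  generalize algebraMap ℂ S α2 = A2 at *
  generalize algebraMap ℂ S β2 = B2 at *
  ext i j
  fin_cases i <;> fin_cases j <;> simp [Matrix.mul_apply, Fin.sum_univ_two]
  · linear_combination hxy
  · ring
  · ring
  · linear_combination hxy

lemma aeval_matC_mulVec (α1 β1 β2 : ℂ) (x y : S) (f : ℂ[X]) :
    (aeval (matC α1 β1 β2 x y) f).mulVec ![1, 0] = ![aeval x f, 0] := by
  induction f using Polynomial.induction_on' with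
  | add f g hf hg => rw [map_add, Matrix.add_mulVec, hf, hg, map_add]; simp
  | monomial k r =>
    rw [← C_mul_X_pow_eq_monomial, map_mul, map_mul, aeval_C, aeval_C, ← Algebra.smul_def,
      ← Algebra.smul_def, Matrix.smul_mulVec]
    have : (aeval (matC α1 β1 β2 x y) (X ^ k : ℂ[X])).mulVec ![1, 0] = ![x ^ k, 0] := by
      rw [aeval_X_pow]
      induction k with
      | zero => simp
      | succ k ih =>
        rw [pow_succ', ← Matrix.mulVec_mulVec, ih, matC]
        ext i; fin_cases i <;> simp [Matrix.mulVec, dotProduct, Fin.sum_univ_two, pow_succ']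
    rw [this, aeval_X_pow]
    ext i; fin_cases i <;> simp

lemma matA_mulVec (α1 α2 : ℂ) (s : S) : (matA α1 α2).mulVec ![s, 0] = ![0, s] := by
  ext i; fin_cases i <;> simp [matA, Matrix.mulVec, dotProduct, Fin.sum_univ_two]

/-- The matrix `p(C)` kills the first basis vector `e₁`, since `p(x) = 0`. Applying
`Cⁿ A p(C) = g p(C) A + r(C) p(C)` to `e₁` shows that it also kills `A e₁ = e₂`. -/
lemma aeval_matC_eq_zero (n : ℕ) {α1 α2 β1 β2 g : ℂ} (hα2 : α2 ≠ 0) (hβ2 : β2 ≠ 0) (hg : g ≠ 0)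
    (p : ℂ[X]) (hp : p.natDegree ≤ n) (x y : S) (hx : aeval x p = 0)
    (hxy : algebraMap ℂ S (α2 * β2) * (y * x) = 1)
    (hQ : Q n (α2 * β2)⁻¹ p = C g * p)
    (hE : p ∣ E n (α2 * β2)⁻¹ (C (β1 / β2) * X - C (α1 / (α2 * β2))) p) :
    aeval (matC α1 β1 β2 x y) p = 0 := by
  have hcac := c_a_c hα2 hβ2 (mat_abc α1 α2 β1 β2 x y hxy) (matA_rel α1 α2)
    (matB_rel α1 α2 β1 β2 hβ2 x y hxy)
  have hk := key n _ _ p hp _ _ hcac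
  obtain ⟨r, hr⟩ := hE
  rw [hr, hQ, mul_comm p r, map_mul, map_mul, aeval_C, ← Algebra.smul_def] at hk
  have h0 : (aeval (matC α1 β1 β2 x y) p).mulVec ![1, 0] = 0 := by
    rw [aeval_matC_mulVec, hx]; ext i; fin_cases i <;> rfl
  have hk' := congrArg (fun M => M.mulVec ![1, 0]) hk
  simp only [Matrix.add_mulVec, ← Matrix.mulVec_mulVec, h0, Matrix.mulVec_zero, add_zero,
    matA_mulVec, Matrix.smul_mulVec] at hk'
  have h1 : (aeval (matC α1 β1 β2 x y) p).mulVec ![0, 1] = 0 := by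
    have := congrArg (fun v => g⁻¹ • v) hk'
    simpa [smul_smul, inv_mul_cancel₀ hg] using this.symm
  ext i j
  fin_cases j
  · simpa [Matrix.mulVec, dotProduct, Fin.sum_univ_two] using congrFun h0 i
  · simpa [Matrix.mulVec, dotProduct, Fin.sum_univ_two] using congrFun h1 i

end Model

/-! ### The dimension of `Aplus` -/

section Algebra
variable (n : ℕ) (α1 α2 β1 β2 : ℂ) (γ : ℕ → ℂ)

/-- The quotient map onto `Aplus`. -/
def π : FreeAlgebra ℂ (Fin 3) →ₐ[ℂ] Aplus n α1 α2 β1 β2 γ := RingQuot.mkAlgHom ℂ _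

lemma aeval_P {B : Type*} [Ring B] [Algebra ℂ B] (φ : FreeAlgebra ℂ (Fin 3) →ₐ[ℂ] B) :
    φ (c ^ n + ∑ k ∈ Finset.Icc 1 n, κ ((-1 : ℂ) ^ k * γ k) * c ^ (n - k)) =
      aeval (φ c) (P n γ) := by
  simp only [P, κ, map_add, map_sum, map_mul, map_pow, aeval_X, aeval_C, AlgHom.commutes]

lemma quad {B : Type*} [Ring B] [Algebra ℂ B] (φ : FreeAlgebra ℂ (Fin 3) →ₐ[ℂ] B)
    (z : FreeAlgebra ℂ (Fin 3)) (r s : ℂ) :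
    φ (z ^ 2 - κ r * z + κ s) = φ z ^ 2 - r • φ z + s • (1 : B) := by
  simp only [κ, map_add, map_sub, map_mul, map_pow, AlgHom.commutes, Algebra.smul_def, mul_one]

lemma π_abc : π n α1 α2 β1 β2 γ a * π n α1 α2 β1 β2 γ b * π n α1 α2 β1 β2 γ c = 1 := by
  rw [← map_mul, ← map_mul, ← map_one (π n α1 α2 β1 β2 γ)]
  exact RingQuot.mkAlgHom_rel ℂ Rel.rabc

lemma π_a : π n α1 α2 β1 β2 γ a ^ 2 - α1 • π n α1 α2 β1 β2 γ a +
    α2 • (1 : Aplus n α1 α2 β1 β2 γ) = 0 := by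
  rw [← quad, ← map_zero (π n α1 α2 β1 β2 γ)]
  exact RingQuot.mkAlgHom_rel ℂ Rel.ra

lemma π_b : π n α1 α2 β1 β2 γ b ^ 2 - β1 • π n α1 α2 β1 β2 γ b +
    β2 • (1 : Aplus n α1 α2 β1 β2 γ) = 0 := by
  rw [← quad, ← map_zero (π n α1 α2 β1 β2 γ)]
  exact RingQuot.mkAlgHom_rel ℂ Rel.rb

lemma π_c : aeval (π n α1 α2 β1 β2 γ c) (P n γ) = 0 := by
  rw [← aeval_P, ← map_zero (π n α1 α2 β1 β2 γ)]
  exact RingQuot.mkAlgHom_rel ℂ Rel.rc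

variable {n α1 α2 β1 β2 γ}

lemma comb_surjective (hα2 : α2 ≠ 0) (hβ2 : β2 ≠ 0) (hP : (P n γ).coeff 0 ≠ 0) :
    Function.Surjective (comb (P n γ) (π n α1 α2 β1 β2 γ c) (π_c n α1 α2 β1 β2 γ)
      (π n α1 α2 β1 β2 γ a)) := by
  set M := LinearMap.range (comb (P n γ) (π n α1 α2 β1 β2 γ c) (π_c n α1 α2 β1 β2 γ)
      (π n α1 α2 β1 β2 γ a)) with hM
  have hcac := c_a_c hα2 hβ2 (π_abc n α1 α2 β1 β2 γ) (π_a n α1 α2 β1 β2 γ) (π_b n α1 α2 β1 β2 γ)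
  have hb := (b_eq hα2 (π_abc n α1 α2 β1 β2 γ) (π_a n α1 α2 β1 β2 γ) (π_b n α1 α2 β1 β2 γ)).2
  have hca : ∀ m ∈ M, π n α1 α2 β1 β2 γ a * m ∈ M := fun m hm =>
    a_mul_mem _ α1 α2 (mul_ne_zero hα2 hβ2) hP _ (π_a n α1 α2 β1 β2 γ) hcac hm
  have hcc : ∀ m ∈ M, π n α1 α2 β1 β2 γ c * m ∈ M := fun m hm => by
    have := ev_mul_mem (AdjoinRoot.root (P n γ)) hm
    rwa [ev_root] at this
  have hcb : ∀ m ∈ M, π n α1 α2 β1 β2 γ b * m ∈ M := fun m hm => by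
    rw [hb, sub_mul, smul_mul_assoc, smul_mul_assoc, one_mul, mul_assoc]
    exact sub_mem (M.smul_mem _ hm) (M.smul_mem _ (hcc _ (hca _ hm)))
  -- `M` is a left ideal containing `1`
  have hall : ∀ z : FreeAlgebra ℂ (Fin 3), ∀ m ∈ M, π n α1 α2 β1 β2 γ z * m ∈ M := by
    intro z
    induction z using FreeAlgebra.induction with
    | grade0 r =>
      intro m hm
      rw [AlgHom.commutes, ← Algebra.smul_def]
      exact M.smul_mem _ hm
    | grade1 i =>
      fin_cases i
      exacts [hca, hcb, hcc]
    | mul x y hx hy =>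
      intro m hm
      rw [map_mul, mul_assoc]
      exact hx _ (hy _ hm)
    | add x y hx hy =>
      intro m hm
      rw [map_add, add_mul]
      exact add_mem (hx _ hm) (hy _ hm)
  have h1 : (1 : Aplus n α1 α2 β1 β2 γ) ∈ M := ⟨(1, 0), by simp [comb_apply]⟩
  intro z
  obtain ⟨z, rfl⟩ := RingQuot.mkAlgHom_surjective ℂ (Rel n α1 α2 β1 β2 γ) z
  have := hall z 1 h1
  rw [mul_one] at this
  exact this

lemma finite_adjoinRoot : Module.Finite ℂ (AdjoinRoot (P n γ)) :=
  (AdjoinRoot.powerBasis' (P_monic n γ)).finite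

lemma finrank_adjoinRoot : Module.finrank ℂ (AdjoinRoot (P n γ)) = n := by
  rw [(AdjoinRoot.powerBasis' (P_monic n γ)).finrank, AdjoinRoot.powerBasis'_dim, P_natDegree]

lemma dvd_of_finrank (hα2 : α2 ≠ 0) (hβ2 : β2 ≠ 0) (hP : (P n γ).coeff 0 ≠ 0)
    (h : Module.finrank ℂ (Aplus n α1 α2 β1 β2 γ) = 2 * n) :
    P n γ ∣ Q n (α2 * β2)⁻¹ (P n γ) ∧
      P n γ ∣ E n (α2 * β2)⁻¹ (C (β1 / β2) * X - C (α1 / (α2 * β2))) (P n γ) := by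
  have hsurj := comb_surjective (α1 := α1) (β1 := β1) hα2 hβ2 hP
  have := finite_adjoinRoot (n := n) (γ := γ)
  have : Module.Finite ℂ (Aplus n α1 α2 β1 β2 γ) := Module.Finite.of_surjective _ hsurj
  have hinj := (LinearMap.injective_iff_surjective_of_finrank_eq_finrank (by
    rw [Module.finrank_prod, finrank_adjoinRoot, h, two_mul])).2 hsurj
  have hcac := c_a_c hα2 hβ2 (π_abc n α1 α2 β1 β2 γ) (π_a n α1 α2 β1 β2 γ) (π_b n α1 α2 β1 β2 γ)
  have hk := key n _ _ _ (P_natDegree n γ).le _ _ hcac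
  rw [π_c, mul_zero] at hk
  rw [← AdjoinRoot.mk_eq_zero, ← AdjoinRoot.mk_eq_zero, and_comm, ← Prod.mk_eq_zero]
  apply hinj
  rw [map_zero, comb_apply, ev_mk, ev_mk, hk, add_comm]

lemma finrank_of_dvd (hα2 : α2 ≠ 0) (hβ2 : β2 ≠ 0) (hP : (P n γ).coeff 0 ≠ 0) {g : ℂ} (hg : g ≠ 0)
    (hQ : Q n (α2 * β2)⁻¹ (P n γ) = C g * P n γ)
    (hE : P n γ ∣ E n (α2 * β2)⁻¹ (C (β1 / β2) * X - C (α1 / (α2 * β2))) (P n γ)) :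
    Module.finrank ℂ (Aplus n α1 α2 β1 β2 γ) = 2 * n := by
  have hsurj := comb_surjective (α1 := α1) (β1 := β1) hα2 hβ2 hP
  have := finite_adjoinRoot (n := n) (γ := γ)
  have : Module.Finite ℂ (Aplus n α1 α2 β1 β2 γ) := Module.Finite.of_surjective _ hsurj
  obtain ⟨y, hy⟩ := exists_inv_root (P n γ) (α2 * β2) (mul_ne_zero hα2 hβ2) hP
  rw [Algebra.smul_def] at hy
  set x := AdjoinRoot.root (P n γ) with hx
  have hMc := aeval_matC_eq_zero n (α1 := α1) (β1 := β1) hα2 hβ2 hg (P n γ) (P_natDegree n γ).le x y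
    (by rw [AdjoinRoot.aeval_eq, AdjoinRoot.mk_self]) hy hQ hE
  set φ : FreeAlgebra ℂ (Fin 3) →ₐ[ℂ] Matrix (Fin 2) (Fin 2) (AdjoinRoot (P n γ)) :=
    FreeAlgebra.lift ℂ ![matA α1 α2, matB α1 α2 β1 β2 x y, matC α1 β1 β2 x y] with hφ
  have φa : φ a = matA α1 α2 := by simp [hφ, a]
  have φb : φ b = matB α1 α2 β1 β2 x y := by simp [hφ, b]
  have φc : φ c = matC α1 β1 β2 x y := by simp [hφ, c]
  let ρ : Aplus n α1 α2 β1 β2 γ →ₐ[ℂ] Matrix (Fin 2) (Fin 2) (AdjoinRoot (P n γ)) :=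
    RingQuot.liftAlgHom ℂ ⟨φ, by
      rintro _ _ (_ | _ | _ | _)
      · rw [map_mul, map_mul, φa, φb, φc, mat_abc _ _ _ _ _ _ hy, map_one]
      · rw [quad, φa, matA_rel, map_zero]
      · rw [quad, φb, matB_rel _ _ _ _ hβ2 _ _ hy, map_zero]
      · rw [aeval_P, φc, hMc, map_zero]⟩
  have hρ : ∀ z, ρ (π n α1 α2 β1 β2 γ z) = φ z := fun z => RingQuot.liftAlgHom_mkAlgHom_apply ..
  -- the orbit map of the first basis vector
  let ψ : Aplus n α1 α2 β1 β2 γ →ₗ[ℂ] (Fin 2 → AdjoinRoot (P n γ)) :=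
    { toFun := fun z => (ρ z).mulVec ![1, 0]
      map_add' := fun z w => by rw [map_add, Matrix.add_mulVec]
      map_smul' := fun r z => by rw [map_smul, Matrix.smul_mulVec]; rfl }
  have hψ : Function.Surjective ψ := by
    intro v
    obtain ⟨f, hf⟩ := AdjoinRoot.mk_surjective (v 0)
    obtain ⟨g, hg⟩ := AdjoinRoot.mk_surjective (v 1)
    refine ⟨aeval (π n α1 α2 β1 β2 γ c) f +
      π n α1 α2 β1 β2 γ a * aeval (π n α1 α2 β1 β2 γ c) g, ?_⟩
    change (ρ _).mulVec ![1, 0] = v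
    rw [map_add, map_mul, ← aeval_algHom_apply, ← aeval_algHom_apply, hρ, hρ, φa, φc,
      Matrix.add_mulVec, ← Matrix.mulVec_mulVec, aeval_matC_mulVec, aeval_matC_mulVec, matA_mulVec,
      AdjoinRoot.aeval_eq, AdjoinRoot.aeval_eq, hf, hg]
    ext i; fin_cases i <;> simp
  apply le_antisymm
  · have := LinearMap.finrank_le_finrank_of_surjective hsurj
    rwa [Module.finrank_prod, finrank_adjoinRoot, ← two_mul] at this
  · have := LinearMap.finrank_le_finrank_of_surjective hψ
    rwa [Module.finrank_pi_fintype, Fin.sum_univ_two, finrank_adjoinRoot, ← two_mul] at this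

end Algebra

end Tilde22n

/-- Flatness locus of `Ã₊(2,2,n)` for `n ≥ 2` even. -/
theorem flatness_tilde_22n_even (n : ℕ) (hn2 : 2 ≤ n) (hneven : Even n)
    (α1 β1 : ℂ) (α2 β2 : ℂ) (γ : ℕ → ℂ)
    (hα2 : α2 ≠ 0) (hβ2 : β2 ≠ 0) (hγn : γ n ≠ 0) :
    Module.finrank ℂ (Tilde22n.Aplus n α1 α2 β1 β2 γ) = 2 * n ↔
      ((α2 * β2) ^ n * γ n ^ 2 = 1 ∧
       (∀ k : ℕ, 1 ≤ k → k ≤ n - 1 → (α2 * β2) ^ k * γ n * γ k = γ (n - k)) ∧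
       (α2 * β2) ^ (n / 2) * γ n * α1 = α1 ∧
       (α2 * β2) ^ (n / 2) * γ n * β1 = β1) := by
  have hn : 1 ≤ n := by omega
  have hP : (Tilde22n.P n γ).coeff 0 ≠ 0 := by
    rwa [Tilde22n.P_coeff_zero n γ hn hneven]
  rw [← Tilde22n.conditions_iff n hn2 hneven α1 β1 α2 β2 γ hα2 hβ2]
  constructor
  · exact Tilde22n.dvd_of_finrank hα2 hβ2 hP
  · rintro ⟨hQ, hE⟩
    exact Tilde22n.finrank_of_dvd hα2 hβ2 hP hγn ((Tilde22n.dvd_Q_iff n hn hneven _ γ).1 hQ) hE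
end
end

section
/- Theorem (flatness locus of $\tilde A_+$), case $(2,2,n)$ with $n$ odd (pointwise over $\mathbb{C}$): Let $n\ge3$ be odd. Then $\dim_{\mathbb{C}}\tilde A_+(2,2,n)=2n$ (i.e., the algebra is flat) if and only if: $(\alpha_2\beta_2)^n\gamma_n^2=1$; $(\alpha_2\beta_2)^k\gamma_n\gamma_k=\gamma_{n-k}$ for all $1\le k\le n-1$; and $\alpha_2^{(n-1)/2}\beta_2^{(n+1)/2}\gamma_n\alpha_1=\beta_1$. -/
/-!
Let `P = Xⁿ - γ₁ Xⁿ⁻¹ + ⋯ + (-1)ⁿ γₙ` be the polynomial annihilating `c`, let `R = ℂ[X]/(P)`, and put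
`q = α₂β₂`. Since `γₙ ≠ 0`, the class `x` of `X` in `R` is invertible.

In `Ã₊(2,2,n)` one has `ab = c⁻¹`, and the quadratic relations express `b` and `ac` through
`ℂ[c, c⁻¹]` and `ℂ[c, c⁻¹] a` (`c_mul_ab`). Hence every element has the form `f(c) + g(c) a`, which
gives a surjection `Φ : R² → Ã₊(2,2,n)` (`rowMap_exists`) and bounds the dimension by `2n`. In these
coordinates right multiplication by `a`, `b`, `c` is given by the matrices `matA`, `matB`, `matC`
over `R`. These always satisfy the relations `abc = 1` and the two quadratic ones, so the only
obstruction to flatness is `P(matC) = 0` (`finrank_aplus_iff`).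

The matrix `matC` is lower triangular with diagonal `x`, `q⁻¹ x⁻¹`. Up to the unit `xⁿ`, the nontrivial
entries of `P(matC)` are the classes of the scaled reversal `Xⁿ P(q⁻¹ X⁻¹)` and of a polynomial `w`
with `(X² - q⁻¹) w = q⁻¹ (α₂β₁ X - α₁) (Xⁿ P - Xⁿ P(q⁻¹ X⁻¹))` (`aeval_matC_eq_zero_iff`). For `n` odd:

* `P` divides its scaled reversal exactly when the reversal is `-γₙ P`, and this is the palindromic
  condition `qᵏ γₙ γₖ = γₙ₋ₖ` for `0 ≤ k ≤ n`, where `γ₀ = 1` (`dvd_rev_iff`, `rev_eq_iff`);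
* under that condition `P ∣ w` means that `X² - q⁻¹` divides `(α₂β₁ X - α₁) (Xⁿ + γₙ)`, which by
  evaluation at the two roots of `X² - q⁻¹` is the remaining condition (`dvd_iff`).
-/

/-!
Theorem (flatness locus of `Ã₊`), case `(2,2,n)` with `n` even. `Ã₊(2,2,n)` is the quotient of
the free unital associative `ℂ`-algebra on `a, b, c` by the two-sided ideal generated by
`abc - 1`, `a² - α₁a + α₂`, `b² - β₁b + β₂` and `cⁿ - γ₁cⁿ⁻¹ + γ₂cⁿ⁻² - ⋯ + (-1)ⁿγₙ`.
Flatness holds iff `dim_ℂ Ã₊(2,2,n) = 2n`.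
-/

noncomputable section

namespace FlatOdd

open Polynomial Matrix

/-! ### The algebra acting on rows of length two -/

/-- The commutative algebra `ℂ[X]/(P)`, in which the class of `X` models the generator `c`. -/
abbrev QuotRing (P : ℂ[X]) : Type := ℂ[X] ⧸ Ideal.span {P}

section relations
variable {A : Type*} [Ring A] [Algebra ℂ A]

/-- The rewriting rules forced by the relations: `ab` is a two-sided inverse of `c`, and `b` and
`ac` can be moved into the span of `ℂ[c, c⁻¹]` and `ℂ[c, c⁻¹] a`. In the last equation `ab = c⁻¹`,
so that it reads `α₂β₂ ac = c⁻¹ a - α₁ c⁻¹ + α₂β₁`. -/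
theorem c_mul_ab {α1 α2 β1 β2 : ℂ} (hα2 : α2 ≠ 0) (hβ2 : β2 ≠ 0) {a b c : A}
    (habc : a * b * c = 1) (ha : a ^ 2 - α1 • a + α2 • (1 : A) = 0)
    (hb : b ^ 2 - β1 • b + β2 • (1 : A) = 0) :
    c * (a * b) = 1 ∧ β2 • (c * a) = β1 • (1 : A) - b ∧
      (α2 * β2) • (a * c) = a * b * a - α1 • (a * b) + (α2 * β1) • (1 : A) := by
  have ha1 : (α1 • (1 : A) - a) * a = α2 • (1 : A) := by
    rw [sub_mul, smul_mul_assoc, one_mul, ← sq, ← sub_eq_zero, ← neg_eq_zero, ← ha]; abel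
  have ha2 : a * (α1 • (1 : A) - a) = α2 • (1 : A) := by
    rw [mul_sub, mul_smul_comm, mul_one, ← sq, ← sub_eq_zero, ← neg_eq_zero, ← ha]; abel
  have hb1 : (β1 • (1 : A) - b) * b = β2 • (1 : A) := by
    rw [sub_mul, smul_mul_assoc, one_mul, ← sq, ← sub_eq_zero, ← neg_eq_zero, ← hb]; abel
  -- `α₁ - a` and `β₁ - b` are `α₂ a⁻¹` and `β₂ b⁻¹`, and `c = b⁻¹ a⁻¹`.
  have hc : (α2 * β2) • c = (β1 • (1 : A) - b) * (α1 • (1 : A) - a) := by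
    calc (α2 * β2) • c = (β1 • (1 : A) - b) * ((α1 • (1 : A) - a) * a) * b * c := by
          rw [ha1, mul_smul_comm, mul_one, smul_mul_assoc, smul_mul_assoc, hb1,
            smul_mul_assoc, one_mul, smul_smul]
      _ = (β1 • (1 : A) - b) * (α1 • (1 : A) - a) * (a * b * c) := by noncomm_ring
      _ = _ := by rw [habc, mul_one]
  have hq : α2 * β2 ≠ 0 := mul_ne_zero hα2 hβ2
  have hca : β2 • (c * a) = β1 • (1 : A) - b := by
    apply smul_right_injective A hα2
    simp only
    rw [smul_smul, ← smul_mul_assoc, hc, mul_assoc, ha1, mul_smul_comm, mul_one]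
  refine ⟨?_, hca, ?_⟩
  · apply smul_right_injective A hβ2
    simp only
    rw [← mul_assoc, ← smul_mul_assoc, hca, hb1]
  · rw [← mul_smul_comm, hc]
    calc a * ((β1 • (1 : A) - b) * (α1 • (1 : A) - a))
        = β1 • (a * (α1 • (1 : A) - a)) - a * b * (α1 • (1 : A) - a) := by
          rw [← mul_assoc, mul_sub a, mul_smul_comm, mul_one, sub_mul, smul_mul_assoc]
      _ = _ := by
          rw [ha2, smul_smul, mul_comm β1, mul_sub, mul_smul_comm, mul_one]; abel

end relations

section matrices
variable {R : Type*} [CommRing R] [Algebra ℂ R]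

/-- Right multiplication by `a` in the coordinates `(v₀, v₁) ↦ v₀ + v₁ a`, acting on row vectors.
The ring `R` plays the role of `ℂ[c, c⁻¹]`. -/
def matA (R : Type*) [CommRing R] [Algebra ℂ R] (α1 α2 : ℂ) : Matrix (Fin 2) (Fin 2) R :=
  !![0, 1; algebraMap ℂ R (-α2), algebraMap ℂ R α1]

/-- Right multiplication by `b` in the coordinates `(v₀, v₁) ↦ v₀ + v₁ a`; the arguments `x` and
`d` stand for `c` and `c⁻¹`. -/
def matB (β1 β2 : ℂ) (x d : R) : Matrix (Fin 2) (Fin 2) R :=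
  !![algebraMap ℂ R β1, -(algebraMap ℂ R β2 * x); d, 0]

/-- Right multiplication by `c` in the coordinates `(v₀, v₁) ↦ v₀ + v₁ a`; the arguments `x` and
`d` stand for `c` and `c⁻¹`. The matrix is lower triangular with diagonal `x`, `(α₂β₂)⁻¹ d`. -/
def matC (α1 α2 β1 β2 : ℂ) (x d : R) : Matrix (Fin 2) (Fin 2) R :=
  !![x, 0; algebraMap ℂ R (α2 * β2)⁻¹ * (algebraMap ℂ R (α2 * β1) - algebraMap ℂ R α1 * d),
    algebraMap ℂ R (α2 * β2)⁻¹ * d]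

theorem mat_rel_a (α1 α2 : ℂ) :
    matA R α1 α2 ^ 2 - α1 • matA R α1 α2 + α2 • (1 : Matrix (Fin 2) (Fin 2) R) = 0 := by
  ext i j
  fin_cases i <;> fin_cases j <;>
    simp [matA, sq, Algebra.smul_def (A := R)]

theorem mat_rel_b (β1 β2 : ℂ) {x d : R} (hx : x * d = 1) :
    matB β1 β2 x d ^ 2 - β1 • matB β1 β2 x d + β2 • (1 : Matrix (Fin 2) (Fin 2) R) = 0 := by
  ext i j
  fin_cases i <;> fin_cases j <;>
    simp [matB, sq, Algebra.smul_def (A := R)] <;>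
    grind

theorem mat_rel_abc {α1 α2 β1 β2 : ℂ} (hα2 : α2 ≠ 0) (hβ2 : β2 ≠ 0) {x d : R}
    (hx : x * d = 1) : matA R α1 α2 * matB β1 β2 x d * matC α1 α2 β1 β2 x d = 1 := by
  have hq : algebraMap ℂ R (α2 * β2)⁻¹ * (algebraMap ℂ R α2 * algebraMap ℂ R β2) = 1 := by
    rw [← map_mul, ← map_mul, inv_mul_cancel₀ (mul_ne_zero hα2 hβ2), map_one]
  unfold matC
  generalize algebraMap ℂ R (α2 * β2)⁻¹ = q at hq ⊢
  ext i j
  fin_cases i <;> fin_cases j <;>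
    simp [matA, matB, Matrix.mul_apply, Fin.sum_univ_two, Algebra.smul_def (A := R)] <;>
    grind

end matrices

/-- In any algebra satisfying the relations, the linear map `Φ (v₀, v₁) = v₀(c) + v₁(c) a` turns
multiplication of row vectors by the three matrices into right multiplication by `a`, `b`, `c`.
Its range is therefore the subalgebra generated by `a`, `b`, `c`. -/
theorem rowMap_exists {P : ℂ[X]} {A : Type*} [Ring A] [Algebra ℂ A]
    {α1 α2 β1 β2 : ℂ} (hα2 : α2 ≠ 0) (hβ2 : β2 ≠ 0) {a b c : A}
    (habc : a * b * c = 1) (ha : a ^ 2 - α1 • a + α2 • (1 : A) = 0)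
    (hb : b ^ 2 - β1 • b + β2 • (1 : A) = 0) (hc : aeval c P = 0)
    {d : QuotRing P} (hd : Ideal.Quotient.mk _ X * d = 1) :
    ∃ Φ : (Fin 2 → QuotRing P) →ₗ[ℂ] A, Φ ![1, 0] = 1 ∧
      (∀ v, Φ (v ᵥ* matA _ α1 α2) = Φ v * a) ∧
      (∀ v, Φ (v ᵥ* matB β1 β2 (Ideal.Quotient.mk _ X) d) = Φ v * b) ∧
      (∀ v, Φ (v ᵥ* matC α1 α2 β1 β2 (Ideal.Quotient.mk _ X) d) = Φ v * c) := by
  obtain ⟨hcd, hca, hac⟩ := c_mul_ab hα2 hβ2 habc ha hb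
  let φ : QuotRing P →ₐ[ℂ] A := Ideal.Quotient.liftₐ (Ideal.span {P}) (aeval c) (by
    intro f hf
    obtain ⟨g, rfl⟩ := Ideal.mem_span_singleton.1 hf
    rw [map_mul, hc, zero_mul])
  have hφx : φ (Ideal.Quotient.mk _ X) = c := by
    change aeval c X = c
    simp
  have hφd : φ d = a * b := by
    calc φ d = (a * b * c) * φ d := by rw [habc, one_mul]
      _ = a * b * (φ (Ideal.Quotient.mk _ X) * φ d) := by rw [hφx, mul_assoc]
      _ = a * b := by rw [← map_mul, hd, map_one, mul_one]
  have ha' : a * a = α1 • a - α2 • (1 : A) := by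
    rw [← sub_eq_zero, ← ha, sq]; abel
  have hq : α2 * β2 ≠ 0 := mul_ne_zero hα2 hβ2
  have hac' : a * c = (α2 * β2)⁻¹ • (a * b * a - α1 • (a * b) + (α2 * β1) • (1 : A)) := by
    rw [← hac, inv_smul_smul₀ hq]
  have hb' : b = β1 • (1 : A) - β2 • (c * a) := by rw [hca]; abel
  refine ⟨φ.toLinearMap.comp (LinearMap.proj 0) +
    (LinearMap.mulRight ℂ a).comp (φ.toLinearMap.comp (LinearMap.proj 1)), ?_, ?_, ?_, ?_⟩
  · simp
  · intro v
    simp only [LinearMap.add_apply, LinearMap.comp_apply, LinearMap.proj_apply,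
      LinearMap.mulRight_apply, AlgHom.toLinearMap_apply, matA, Matrix.vecMul, dotProduct,
      Fin.sum_univ_two, Matrix.of_apply, Matrix.cons_val_zero, Matrix.cons_val_one,
      mul_zero, zero_add, mul_one, map_one, map_add, map_mul, map_smul, add_mul, mul_assoc, ha',
      mul_sub, mul_smul_comm, map_neg, mul_neg, Algebra.algebraMap_eq_smul_one]
    module
  · intro v
    have key : φ (v 0) * b = β1 • φ (v 0) - β2 • (φ (v 0) * (c * a)) := by
      conv_lhs => rw [hb']
      simp only [mul_sub, mul_smul_comm, mul_one]
    simp only [LinearMap.add_apply, LinearMap.comp_apply, LinearMap.proj_apply,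
      LinearMap.mulRight_apply, AlgHom.toLinearMap_apply, matB, Matrix.vecMul, dotProduct,
      Fin.sum_univ_two, Matrix.of_apply, Matrix.cons_val_zero, Matrix.cons_val_one,
      mul_zero, add_zero, mul_one, map_add, map_mul, map_smul, add_mul, mul_assoc,
      mul_smul_comm, map_neg, mul_neg, Algebra.algebraMap_eq_smul_one, smul_mul_assoc,
      one_mul, hφx, hφd, key]
    module
  · intro v
    simp only [LinearMap.add_apply, LinearMap.comp_apply, LinearMap.proj_apply,
      LinearMap.mulRight_apply, AlgHom.toLinearMap_apply, matC, Matrix.vecMul, dotProduct,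
      Fin.sum_univ_two, Matrix.of_apply, Matrix.cons_val_zero, Matrix.cons_val_one,
      mul_zero, zero_add, mul_one, map_add, map_sub, map_mul, map_smul, add_mul, mul_assoc,
      mul_sub, mul_smul_comm, Algebra.algebraMap_eq_smul_one, smul_mul_assoc, mul_add,
      one_mul, hφx, hφd, hac', smul_add, smul_sub]
    module

/-- A linear map intertwining `M` with right multiplication by `c` also intertwines `f(M)` with
right multiplication by `f(c)`. -/
theorem vecMul_aeval {R A : Type*} [CommRing R] [Algebra ℂ R] [Ring A] [Algebra ℂ A]
    (Φ : (Fin 2 → R) →ₗ[ℂ] A) {M : Matrix (Fin 2) (Fin 2) R} {c : A}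
    (h : ∀ v, Φ (v ᵥ* M) = Φ v * c) (f : ℂ[X]) (v : Fin 2 → R) :
    Φ (v ᵥ* aeval M f) = Φ v * aeval c f := by
  induction f using Polynomial.induction_on' with
  | add p q hp hq => simp [Matrix.vecMul_add, hp, hq, mul_add]
  | monomial k z =>
    have hk : ∀ k : ℕ, Φ (v ᵥ* M ^ k) = Φ v * c ^ k := by
      intro k
      induction k with
      | zero => simp
      | succ k ih => rw [pow_succ, ← Matrix.vecMul_vecMul, h, ih, pow_succ, mul_assoc]
    simp only [aeval_monomial, ← Algebra.smul_def, Matrix.vecMul_smul, map_smul, hk, mul_smul_comm]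

theorem finrank_quot {P : ℂ[X]} (hP : P.Monic) :
    Module.finrank ℂ (QuotRing P) = P.natDegree ∧ Module.Finite ℂ (QuotRing P) :=
  ⟨(AdjoinRoot.powerBasis' hP).finrank, (AdjoinRoot.powerBasis' hP).finite⟩

/-! ### Annihilation of `matC` by `P` as divisibility of polynomials -/

theorem pow_lower {R : Type*} [CommRing R] {M : Matrix (Fin 2) (Fin 2) R} (h : M 0 1 = 0)
    (k : ℕ) : (M ^ k) 0 0 = M 0 0 ^ k ∧ (M ^ k) 0 1 = 0 ∧ (M ^ k) 1 1 = M 1 1 ^ k := by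
  induction k with
  | zero => simp
  | succ k ih =>
    obtain ⟨h1, h2, h3⟩ := ih
    simp [pow_succ, Matrix.mul_apply, Fin.sum_univ_two, h, h1, h2, h3]

theorem aeval_lower {R : Type*} [CommRing R] [Algebra ℂ R] {M : Matrix (Fin 2) (Fin 2) R}
    (h : M 0 1 = 0) (f : ℂ[X]) :
    (aeval M f) 0 0 = aeval (M 0 0) f ∧ (aeval M f) 0 1 = 0 := by
  simp only [aeval_eq_sum_range, Matrix.sum_apply, Matrix.smul_apply, pow_lower h, smul_zero,
    Finset.sum_const_zero, and_self]

/-- For `natDegree P ≤ n` this is `Xⁿ P(r X⁻¹)`, the reversal of `P` with its variable scaled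
by `r`. -/
def rev (P : ℂ[X]) (n : ℕ) (r : ℂ) : ℂ[X] :=
  ∑ k ∈ Finset.range (n + 1), C (P.coeff k * r ^ k) * X ^ (n - k)

/-- Coefficients of a polynomial listed from the top degree `n` downwards. -/
theorem coeff_sum (n : ℕ) (u : ℕ → ℂ) (j : ℕ) :
    (∑ k ∈ Finset.range (n + 1), C (u k) * X ^ (n - k) : ℂ[X]).coeff j =
      if j ≤ n then u (n - j) else 0 := by
  simp only [finsetSum_coeff, coeff_C_mul_X_pow]
  split_ifs with h
  · rw [Finset.sum_eq_single (n - j)]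
    · rw [if_pos (by omega)]
    · intro b hb hne
      rw [Finset.mem_range] at hb
      rw [if_neg (by omega)]
    · intro hb
      rw [Finset.mem_range] at hb
      omega
  · exact Finset.sum_eq_zero fun k _ => if_neg (by omega)

/-- The matrix `X • matC` with `x = X` and `d = X⁻¹`: clearing the denominator `d` in `matC` gives
a matrix of honest polynomials. -/
def scaledC (α1 α2 β1 β2 : ℂ) : Matrix (Fin 2) (Fin 2) ℂ[X] :=
  !![X ^ 2, 0; C (α2 * β2)⁻¹ * (C (α2 * β1) * X - C α1), C (α2 * β2)⁻¹]

theorem smul_matrix_pow {R : Type*} [CommRing R] (r : R) (M : Matrix (Fin 2) (Fin 2) R) (k : ℕ) :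
    (r • M) ^ k = r ^ k • M ^ k :=
  _root_.smul_pow r M k

/-- With `q = α₂β₂`, the polynomial `w` is the lower left entry of `Xⁿ P(matC)`, cleared of
denominators. The diagonal entries are `Xⁿ P` and `rev P n q⁻¹`, so that modulo `P` only two entries
can fail to vanish; `w` is determined by them because `P(matC)` commutes with `matC`. -/
theorem aeval_matC_eq_zero_iff {P : ℂ[X]} {n : ℕ} (hn : P.natDegree = n) (α1 α2 β1 β2 : ℂ)
    {d : QuotRing P} (hd : Ideal.Quotient.mk _ X * d = 1) :
    ∃ w : ℂ[X], (X ^ 2 - C (α2 * β2)⁻¹) * w =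
        C (α2 * β2)⁻¹ * (C (α2 * β1) * X - C α1) * (X ^ n * P - rev P n (α2 * β2)⁻¹) ∧
      (aeval (matC α1 α2 β1 β2 (Ideal.Quotient.mk _ X) d) P = 0 ↔
        P ∣ rev P n (α2 * β2)⁻¹ ∧ P ∣ w) := by
  set N := scaledC α1 α2 β1 β2 with hN
  have hN01 : N 0 1 = 0 := by simp [hN, scaledC]
  have hN00 : N 0 0 = X ^ 2 := by simp [hN, scaledC]
  have hN11 : N 1 1 = C (α2 * β2)⁻¹ := by simp [hN, scaledC]
  have hN10 : N 1 0 = C (α2 * β2)⁻¹ * (C (α2 * β1) * X - C α1) := by simp [hN, scaledC]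
  -- `Z` is `Xⁿ P(N / X)`, a polynomial matrix lifting `xⁿ P(matC)`.
  set Z : Matrix (Fin 2) (Fin 2) ℂ[X] :=
    ∑ k ∈ Finset.range (n + 1), (C (P.coeff k) * X ^ (n - k)) • N ^ k with hZ
  have hZ00 : Z 0 0 = X ^ n * P := by
    simp only [hZ, Matrix.sum_apply, Matrix.smul_apply, pow_lower hN01, hN00, smul_eq_mul]
    conv_rhs => rw [P.as_sum_range_C_mul_X_pow, hn, Finset.mul_sum]
    refine Finset.sum_congr rfl fun k hk => ?_
    rw [Finset.mem_range] at hk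
    rw [← pow_mul, mul_assoc, ← pow_add, mul_left_comm, ← pow_add]
    congr 2
    omega
  have hZ01 : Z 0 1 = 0 := by
    simp [hZ, Matrix.sum_apply, pow_lower hN01]
  have hZ11 : Z 1 1 = rev P n (α2 * β2)⁻¹ := by
    simp only [hZ, Matrix.sum_apply, Matrix.smul_apply, pow_lower hN01, hN11, smul_eq_mul, rev]
    refine Finset.sum_congr rfl fun k _ => ?_
    rw [C_mul, C_pow]
    ring
  have hcomm : Z * N = N * Z := by
    rw [hZ, Finset.sum_mul, Finset.mul_sum]
    refine Finset.sum_congr rfl fun k _ => ?_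
    rw [smul_mul_assoc, mul_smul_comm, pow_mul_comm']
  refine ⟨Z 1 0, ?_, ?_⟩
  · -- The lower left entry of `Z N = N Z` gives the relation between `w` and the diagonal of `Z`.
    have h := congrFun (congrFun hcomm 1) 0
    simp only [Matrix.mul_apply, Fin.sum_univ_two, hZ00, hZ11, hN00, hN11, hN10] at h
    linear_combination h
  · set x : QuotRing P := Ideal.Quotient.mk _ X with hx
    set M := matC α1 α2 β1 β2 x d with hM
    have hC : ∀ z : ℂ, Ideal.Quotient.mk (Ideal.span {P}) (C z) = algebraMap ℂ _ z :=
      fun _ => rfl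
    have hNM : (Ideal.Quotient.mk (Ideal.span {P})).mapMatrix N = x • M := by
      ext i j
      fin_cases i <;> fin_cases j <;>
        simp only [hN, hM, scaledC, matC, RingHom.mapMatrix_apply, Matrix.map_apply,
          Matrix.smul_apply, smul_eq_mul, Fin.zero_eta, Fin.mk_one, Matrix.of_apply,
          Matrix.cons_val', Matrix.cons_val_zero, Matrix.cons_val_one, Matrix.cons_val_fin_one,
          map_mul, map_sub, map_pow, map_zero, hC, ← hx] <;> grind
    have hZM : (Ideal.Quotient.mk (Ideal.span {P})).mapMatrix Z = x ^ n • aeval M P := by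
      have hs : ∀ (f : ℂ[X]) (K : Matrix (Fin 2) (Fin 2) ℂ[X]),
          (Ideal.Quotient.mk (Ideal.span {P})).mapMatrix (f • K) =
            Ideal.Quotient.mk (Ideal.span {P}) f •
              (Ideal.Quotient.mk (Ideal.span {P})).mapMatrix K := by
        intro f K
        ext i j
        simp
      rw [aeval_eq_sum_range, hn, Finset.smul_sum, hZ, map_sum]
      refine Finset.sum_congr rfl fun k hk => ?_
      rw [Finset.mem_range] at hk
      rw [hs, map_pow, hNM, smul_matrix_pow, smul_smul, map_mul, hC, map_pow, ← hx, mul_assoc,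
        ← pow_add, Nat.sub_add_cancel (by omega), ← algebraMap_smul (QuotRing P) (P.coeff k) (M ^ k),
        smul_smul, mul_comm]
    have h1 : aeval M P = 0 ↔ x ^ n • aeval M P = 0 := by
      constructor
      · intro h
        rw [h, smul_zero]
      · intro h
        rw [← one_smul (QuotRing P) (aeval M P), ← one_pow n, ← hd, mul_comm x d, mul_pow,
          ← smul_smul, h, smul_zero]
    rw [h1, ← hZM]
    simp only [← Ideal.mem_span_singleton, ← Ideal.Quotient.eq_zero_iff_mem]
    constructor
    · intro h
      refine ⟨?_, ?_⟩
      · simpa [hZ11] using congrFun (congrFun h 1) 1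
      · simpa using congrFun (congrFun h 1) 0
    · rintro ⟨h11, h10⟩
      ext i j
      fin_cases i <;> fin_cases j
      · simp only [RingHom.mapMatrix_apply, Matrix.map_apply, Fin.zero_eta, hZ00, Matrix.zero_apply]
        rw [Ideal.Quotient.eq_zero_iff_mem, Ideal.mem_span_singleton]
        exact dvd_mul_left _ _
      · simp [hZ01]
      · simpa using h10
      · simpa [hZ11] using h11

/-! ### The palindromic condition and the remaining condition -/

/-- The sequence `γ` with the value at `0` replaced by `γ₀ = 1`. -/
def gam (γ : ℕ → ℂ) (k : ℕ) : ℂ := if k = 0 then 1 else γ k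

/-- The polynomial `Xⁿ - γ₁ Xⁿ⁻¹ + ⋯ + (-1)ⁿ γₙ` annihilating the generator `c`. -/
def relPoly (n : ℕ) (γ : ℕ → ℂ) : ℂ[X] :=
  ∑ k ∈ Finset.range (n + 1), C ((-1) ^ k * gam γ k) * X ^ (n - k)

theorem relPoly_coeff (n : ℕ) (γ : ℕ → ℂ) {k : ℕ} (hk : k ≤ n) :
    (relPoly n γ).coeff k = (-1) ^ (n - k) * gam γ (n - k) := by
  rw [relPoly, coeff_sum, if_pos hk]

theorem relPoly_natDegree (n : ℕ) (γ : ℕ → ℂ) : (relPoly n γ).natDegree = n := by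
  apply natDegree_eq_of_le_of_coeff_ne_zero
  · rw [natDegree_le_iff_coeff_eq_zero]
    intro k hk
    rw [relPoly, coeff_sum, if_neg (by omega)]
  · rw [relPoly_coeff n γ le_rfl]
    simp [gam]

theorem relPoly_monic (n : ℕ) (γ : ℕ → ℂ) : (relPoly n γ).Monic := by
  rw [Monic, leadingCoeff, relPoly_natDegree, relPoly_coeff n γ le_rfl]
  simp [gam]

theorem aeval_relPoly {A : Type*} [Ring A] [Algebra ℂ A] (n : ℕ) (γ : ℕ → ℂ) (c : A) :
    aeval c (relPoly n γ) = c ^ n +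
      ∑ k ∈ Finset.Icc 1 n, algebraMap ℂ A ((-1 : ℂ) ^ k * γ k) * c ^ (n - k) := by
  have h : Finset.range (n + 1) = insert 0 (Finset.Icc 1 n) := by
    ext k
    simp only [Finset.mem_range, Finset.mem_insert, Finset.mem_Icc]
    omega
  rw [relPoly, h, Finset.sum_insert (by simp)]
  simp only [map_add, map_sum, map_mul, aeval_C, map_pow, aeval_X]
  congr 1
  · simp [gam]
  · refine Finset.sum_congr rfl fun k hk => ?_
    rw [Finset.mem_Icc] at hk
    rw [gam, if_neg (by omega)]

/-- For `n` odd, comparing coefficients turns the palindromic condition on the `γₖ` into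
proportionality of `P` to its scaled reversal. -/
theorem rev_eq_iff {n : ℕ} (hn : Odd n) (γ : ℕ → ℂ) {q : ℂ} (hq : q ≠ 0) :
    rev (relPoly n γ) n q⁻¹ = C (-γ n) * relPoly n γ ↔
      ∀ k ≤ n, q ^ k * γ n * gam γ k = gam γ (n - k) := by
  have key : ∀ k ≤ n, (rev (relPoly n γ) n q⁻¹).coeff (n - k) =
      (C (-γ n) * relPoly n γ).coeff (n - k) ↔ q ^ k * γ n * gam γ k = gam γ (n - k) := by
    intro k hk
    have hs : (-1 : ℂ) ^ (n - k) = -(-1) ^ k := by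
      have h : (-1 : ℂ) ^ (n - k) * (-1) ^ k = -1 := by
        rw [← pow_add, Nat.sub_add_cancel hk, hn.neg_one_pow]
      have h2 : (-1 : ℂ) ^ k * (-1) ^ k = 1 := by
        rw [← mul_pow]; simp
      linear_combination (-1 : ℂ) ^ k * h - (-1) ^ (n - k) * h2
    have h1 : (-1 : ℂ) ^ k ≠ 0 := pow_ne_zero _ (by norm_num)
    rw [rev, coeff_sum, if_pos (Nat.sub_le _ _), coeff_C_mul, Nat.sub_sub_self hk,
      relPoly_coeff n γ hk, relPoly_coeff n γ (Nat.sub_le _ _), Nat.sub_sub_self hk, hs, inv_pow]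
    have hqk : q ^ k ≠ 0 := pow_ne_zero _ hq
    field_simp
    constructor
    · intro h
      linear_combination h
    · intro h
      linear_combination h
  constructor
  · intro h k hk
    rw [← key k hk, h]
  · intro h
    ext j
    by_cases hj : j ≤ n
    · have := (key (n - j) (Nat.sub_le _ _)).2 (h _ (Nat.sub_le _ _))
      rwa [Nat.sub_sub_self hj] at this
    · rw [rev, coeff_sum, if_neg hj, coeff_C_mul, relPoly, coeff_sum, if_neg hj, mul_zero]

/-- As `P` is monic of degree `n` and the reversal has degree at most `n`, divisibility means
proportionality; the factor `-γₙ` is the coefficient of `Xⁿ` in the reversal. -/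
theorem dvd_rev_iff {n : ℕ} (hn : Odd n) (γ : ℕ → ℂ) {q : ℂ} :
    relPoly n γ ∣ rev (relPoly n γ) n q⁻¹ ↔
      rev (relPoly n γ) n q⁻¹ = C (-γ n) * relPoly n γ := by
  constructor
  · intro h
    have hdeg : (rev (relPoly n γ) n q⁻¹).natDegree ≤ n := by
      rw [natDegree_le_iff_coeff_eq_zero]
      intro k hk
      rw [rev, coeff_sum, if_neg (by omega)]
    have h1 := eq_leadingCoeff_mul_of_monic_of_dvd_of_natDegree_le (relPoly_monic n γ) h
      (by rwa [relPoly_natDegree])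
    set μ := (rev (relPoly n γ) n q⁻¹).leadingCoeff with hμ
    clear_value μ
    have h2 := congrArg (fun f => coeff f n) h1
    have hn0 : n ≠ 0 := by rintro rfl; simp at hn
    simp only [rev, coeff_sum, le_refl, if_true, coeff_C_mul, relPoly_coeff n γ le_rfl,
      relPoly_coeff n γ (Nat.zero_le _), Nat.sub_self, Nat.sub_zero, gam, hn0, if_false,
      hn.neg_one_pow, pow_zero, mul_one] at h2
    rw [h1, ← h2, neg_one_mul]
  · intro h
    rw [h]
    exact dvd_mul_left _ _

/-- Once the palindromic condition holds, `P` cancels, and `P ∣ w` says that `X² - q⁻¹` divides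
`(α₂β₁ X - α₁)(Xⁿ + γₙ)`, where `q = α₂β₂`. The roots of `X² - q⁻¹` are `±t` with `t = γₙ qᵐ`, and
`tⁿ = γₙ`. As `n` is odd, `-t` is a root of `Xⁿ + γₙ` while `t` is not, so the condition is
`α₂β₁ t = α₁`. -/
theorem dvd_iff {n m : ℕ} (hn : n = 2 * m + 1) {γ : ℕ → ℂ} {α1 α2 β1 β2 : ℂ}
    (hα2 : α2 ≠ 0) (hβ2 : β2 ≠ 0) (hγn : γ n ≠ 0) {w : ℂ[X]}
    (hpal : (α2 * β2) ^ n * γ n ^ 2 = 1)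
    (hw : (X ^ 2 - C (α2 * β2)⁻¹) * w =
        C (α2 * β2)⁻¹ * (C (α2 * β1) * X - C α1) *
          (X ^ n * relPoly n γ - C (-γ n) * relPoly n γ)) :
    relPoly n γ ∣ w ↔ α2 ^ m * β2 ^ (m + 1) * γ n * α1 = β1 := by
  have hq : α2 * β2 ≠ 0 := mul_ne_zero hα2 hβ2
  have hP : relPoly n γ ≠ 0 := (relPoly_monic n γ).ne_zero
  set t : ℂ := γ n * (α2 * β2) ^ m with ht
  have ht2 : (α2 * β2) * t ^ 2 = 1 := by
    have h : (α2 * β2) ^ n = (α2 * β2) ^ (2 * m + 1) := congrArg _ hn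
    rw [← hpal, h, ht]; ring
  have ht2' : t ^ 2 = (α2 * β2)⁻¹ := by
    field_simp; linear_combination ht2
  have htn : t ^ n = γ n := by
    have h : t ^ n = t ^ (2 * m + 1) := congrArg _ hn
    rw [h, pow_succ, pow_mul, ht2', ht, inv_pow]
    field_simp
  have hcond : α2 * β1 * t = α1 ↔ α2 ^ m * β2 ^ (m + 1) * γ n * α1 = β1 := by
    have h : α2 ^ m * β2 ^ (m + 1) * γ n = β2 * t := by rw [ht]; ring
    rw [h]
    constructor
    · rintro rfl
      linear_combination β1 * ht2
    · rintro rfl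
      linear_combination α1 * ht2
  rw [← hcond]
  constructor
  · rintro ⟨y, rfl⟩
    have h1 : (X ^ 2 - C (α2 * β2)⁻¹) * y =
        C (α2 * β2)⁻¹ * (C (α2 * β1) * X - C α1) * (X ^ n - C (-γ n)) := by
      apply mul_left_cancel₀ hP
      linear_combination hw
    have h2 := congrArg (eval t) h1
    simp only [eval_mul, eval_sub, eval_pow, eval_X, eval_C, ht2', sub_self, zero_mul, htn] at h2
    have h3 : γ n - -γ n ≠ 0 := by
      rw [sub_neg_eq_add, ← two_mul]
      exact mul_ne_zero two_ne_zero hγn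
    have h4 := (mul_eq_zero.1 h2.symm).resolve_right h3
    exact sub_eq_zero.1 ((mul_eq_zero.1 h4).resolve_left (inv_ne_zero hq))
  · intro h
    have hroot : IsRoot (X ^ n - C (-γ n)) (-t) := by
      have hodd : Odd n := ⟨m, hn⟩
      simp [hodd.neg_pow, htn]
    obtain ⟨Q, hQ⟩ := dvd_iff_isRoot.2 hroot
    have hne : (X ^ 2 - C (α2 * β2)⁻¹ : ℂ[X]) ≠ 0 :=
      (monic_X_pow_sub_C _ two_ne_zero).ne_zero
    refine ⟨C (α2 * β2)⁻¹ * C (α2 * β1) * Q, mul_left_cancel₀ hne ?_⟩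
    rw [C_neg] at hQ
    rw [hw, ← h, ← ht2']
    simp only [C_mul, C_pow, C_neg] at hQ ⊢
    linear_combination C t ^ 2 * (C α2 * C β1 * X - C α2 * C β1 * C t) * relPoly n γ * hQ

/-! ### Flatness as annihilation of `matC` -/

theorem exists_inv_X {P : ℂ[X]} (h0 : P.coeff 0 ≠ 0) :
    ∃ d : QuotRing P, Ideal.Quotient.mk _ X * d = 1 := by
  refine ⟨Ideal.Quotient.mk _ (C (-(P.coeff 0)⁻¹) * P.divX), ?_⟩
  rw [← map_mul, ← map_one (Ideal.Quotient.mk (Ideal.span {P})), Ideal.Quotient.eq,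
    Ideal.mem_span_singleton]
  refine ⟨C (-(P.coeff 0)⁻¹), ?_⟩
  have h1 : C (P.coeff 0) * C (P.coeff 0)⁻¹ = (1 : ℂ[X]) := by
    rw [← C_mul, mul_inv_cancel₀ h0, C_1]
  rw [C_neg]
  linear_combination (-C (P.coeff 0)⁻¹) * X_mul_divX_add P + h1

theorem finrank_vec {P : ℂ[X]} (hP : P.Monic) :
    Module.finrank ℂ (Fin 2 → QuotRing P) = 2 * P.natDegree := by
  have := (finrank_quot hP).2
  rw [Module.finrank_pi_fintype]
  simp [(finrank_quot hP).1]

/-- Flatness criterion: `Ã₊(2,2,n)` has dimension `2n` if and only if `P(matC) = 0`, where `P` is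
the polynomial annihilating `c`. If the dimension is `2n` then the surjection `Φ` of `rowMap_exists`
is bijective, and `P(c) = 0` transfers to `matC`. If `P(matC) = 0` then the three matrices represent
`Ã₊(2,2,n)`, and the first rows of the representing matrices fill up a space of dimension `2n`. -/
theorem finrank_aplus_iff {n : ℕ} {α1 α2 β1 β2 : ℂ} {γ : ℕ → ℂ}
    {P : ℂ[X]} (hPdef : P = relPoly n γ)
    (hα2 : α2 ≠ 0) (hβ2 : β2 ≠ 0) {d : QuotRing P} (hd : Ideal.Quotient.mk _ X * d = 1) :
    Module.finrank ℂ (Tilde22n.Aplus n α1 α2 β1 β2 γ) = 2 * n ↔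
      aeval (matC α1 α2 β1 β2 (Ideal.Quotient.mk _ X) d) P = 0 := by
  have hPm : P.Monic := hPdef ▸ relPoly_monic n γ
  have heval : ∀ {A : Type} [Ring A] [Algebra ℂ A] (c : A), aeval c P = c ^ n +
      ∑ k ∈ Finset.Icc 1 n, algebraMap ℂ A ((-1 : ℂ) ^ k * γ k) * c ^ (n - k) := by
    subst hPdef
    intro A _ _ c
    exact aeval_relPoly n γ c
  set x : QuotRing P := Ideal.Quotient.mk _ X with hx
  have hfin : Module.Finite ℂ (QuotRing P) := (finrank_quot hPm).2
  have hdim : Module.finrank ℂ (Fin 2 → QuotRing P) = 2 * n := by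
    rw [finrank_vec hPm, congrArg natDegree hPdef, relPoly_natDegree]
  let π := RingQuot.mkAlgHom ℂ (Tilde22n.Rel n α1 α2 β1 β2 γ)
  have hπ : Function.Surjective π := RingQuot.mkAlgHom_surjective ℂ _
  have habc : π Tilde22n.a * π Tilde22n.b * π Tilde22n.c = 1 := by
    rw [← map_mul, ← map_mul, ← map_one π]
    exact RingQuot.mkAlgHom_rel ℂ Tilde22n.Rel.rabc
  have ha : π Tilde22n.a ^ 2 - α1 • π Tilde22n.a +
      α2 • (1 : Tilde22n.Aplus n α1 α2 β1 β2 γ) = 0 := by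
    have h := RingQuot.mkAlgHom_rel ℂ (Tilde22n.Rel.ra (n := n) (α1 := α1) (α2 := α2)
      (β1 := β1) (β2 := β2) (γ := γ))
    simpa only [Tilde22n.κ, map_add, map_sub, map_mul, map_pow, AlgHom.commutes, map_zero,
      Algebra.algebraMap_eq_smul_one, smul_mul_assoc, one_mul, map_smul, map_one] using h
  have hb : π Tilde22n.b ^ 2 - β1 • π Tilde22n.b +
      β2 • (1 : Tilde22n.Aplus n α1 α2 β1 β2 γ) = 0 := by
    have h := RingQuot.mkAlgHom_rel ℂ (Tilde22n.Rel.rb (n := n) (α1 := α1) (α2 := α2)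
      (β1 := β1) (β2 := β2) (γ := γ))
    simpa only [Tilde22n.κ, map_add, map_sub, map_mul, map_pow, AlgHom.commutes, map_zero,
      Algebra.algebraMap_eq_smul_one, smul_mul_assoc, one_mul, map_smul, map_one] using h
  have hc : aeval (π Tilde22n.c) P = 0 := by
    have h := RingQuot.mkAlgHom_rel ℂ (Tilde22n.Rel.rc (n := n) (α1 := α1) (α2 := α2)
      (β1 := β1) (β2 := β2) (γ := γ))
    simp only [Tilde22n.κ, map_add, map_sum, map_mul, map_pow, AlgHom.commutes, map_zero] at h
    rw [heval]
    simpa only [map_mul, map_pow] using h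
  obtain ⟨Φ, hΦ1, hΦa, hΦb, hΦc⟩ := rowMap_exists (P := P) hα2 hβ2 habc ha hb hc hd
  -- The range of `Φ` contains `1` and is stable under right multiplication by the generators.
  have hsurj : Function.Surjective Φ := by
    have hmul : ∀ f : FreeAlgebra ℂ (Fin 3), ∀ v, ∃ v₁, Φ v₁ = Φ v * π f := by
      intro f
      induction f with
      | grade0 r =>
        intro v
        exact ⟨r • v, by
          rw [map_smul, AlgHom.commutes, Algebra.algebraMap_eq_smul_one, mul_smul_comm, mul_one]⟩
      | grade1 i =>
        intro v
        fin_cases i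
        · exact ⟨_, hΦa v⟩
        · exact ⟨_, hΦb v⟩
        · exact ⟨_, hΦc v⟩
      | mul f g hf hg =>
        intro v
        obtain ⟨v₁, h₁⟩ := hf v
        obtain ⟨v₂, h₂⟩ := hg v₁
        exact ⟨v₂, by rw [h₂, h₁, map_mul, mul_assoc]⟩
      | add f g hf hg =>
        intro v
        obtain ⟨v₁, h₁⟩ := hf v
        obtain ⟨v₂, h₂⟩ := hg v
        exact ⟨v₁ + v₂, by rw [map_add, h₂, h₁, map_add, mul_add]⟩
    intro y
    obtain ⟨f, rfl⟩ := hπ y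
    obtain ⟨v, hv⟩ := hmul f ![1, 0]
    exact ⟨v, by rw [hv, hΦ1, one_mul]⟩
  have hAfin : Module.Finite ℂ (Tilde22n.Aplus n α1 α2 β1 β2 γ) :=
    Module.Finite.of_surjective Φ hsurj
  constructor
  · intro h
    have hinj : Function.Injective Φ :=
      (LinearMap.injective_iff_surjective_of_finrank_eq_finrank (hdim.trans h.symm)).2 hsurj
    have hz : ∀ v : Fin 2 → QuotRing P, v ᵥ* aeval (matC α1 α2 β1 β2 x d) P = 0 := by
      intro v
      apply hinj
      rw [vecMul_aeval Φ hΦc, hc, mul_zero, map_zero]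
    ext i j
    simpa using congrFun (hz (Pi.single i 1)) j
  · intro h
    apply le_antisymm
    · rw [← hdim]
      exact LinearMap.finrank_le_finrank_of_surjective hsurj
    · rw [← hdim]
      -- The representation of the free algebra, which descends to `Ã₊(2,2,n)` by `hF`.
      let F : FreeAlgebra ℂ (Fin 3) →ₐ[ℂ] Matrix (Fin 2) (Fin 2) (QuotRing P) :=
        FreeAlgebra.lift ℂ ![matA _ α1 α2, matB β1 β2 x d, matC α1 α2 β1 β2 x d]
      have hFa : F Tilde22n.a = matA _ α1 α2 := by simp [F, Tilde22n.a]
      have hFb : F Tilde22n.b = matB β1 β2 x d := by simp [F, Tilde22n.b]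
      have hFc : F Tilde22n.c = matC α1 α2 β1 β2 x d := by simp [F, Tilde22n.c]
      have hF : ∀ ⦃f g⦄, Tilde22n.Rel n α1 α2 β1 β2 γ f g → F f = F g := by
        intro f g hfg
        cases hfg with
        | rabc => rw [map_mul, map_mul, map_one, hFa, hFb, hFc, mat_rel_abc hα2 hβ2 hd]
        | ra =>
          rw [map_zero, ← mat_rel_a (R := QuotRing P) α1 α2, ← hFa]
          simp only [Tilde22n.κ, map_add, map_sub, map_pow,
            Algebra.algebraMap_eq_smul_one, smul_mul_assoc, one_mul, map_smul, map_one]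
        | rb =>
          rw [map_zero, ← mat_rel_b β1 β2 hd, ← hFb]
          simp only [Tilde22n.κ, map_add, map_sub, map_pow,
            Algebra.algebraMap_eq_smul_one, smul_mul_assoc, one_mul, map_smul, map_one]
        | rc =>
          rw [map_zero, ← h, heval, ← hFc]
          simp only [Tilde22n.κ, map_add, map_sum, map_mul, map_pow, AlgHom.commutes]
      let ρ := RingQuot.liftAlgHom ℂ ⟨F, hF⟩
      have hρ : ∀ f, ρ (π f) = F f := fun f => RingQuot.liftAlgHom_mkAlgHom_apply ℂ F hF f
      -- The first row of the representing matrix.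
      let Ψ : Tilde22n.Aplus n α1 α2 β1 β2 γ →ₗ[ℂ] (Fin 2 → QuotRing P) :=
        (LinearMap.proj 0).comp
          (show Tilde22n.Aplus n α1 α2 β1 β2 γ →ₗ[ℂ] (Fin 2 → Fin 2 → QuotRing P) from
            ρ.toLinearMap)
      have hΨ : ∀ f, Ψ (π f) = F f 0 := fun f => congrFun (hρ f) 0
      apply LinearMap.finrank_le_finrank_of_surjective (f := Ψ)
      intro v
      obtain ⟨f, hf⟩ := Ideal.Quotient.mk_surjective (v 0)
      obtain ⟨g, hg⟩ := Ideal.Quotient.mk_surjective (v 1)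
      refine ⟨π (aeval Tilde22n.c f + aeval Tilde22n.c g * Tilde22n.a), ?_⟩
      have hM : matC α1 α2 β1 β2 x d 0 1 = 0 := by simp [matC]
      have hM0 : matC α1 α2 β1 β2 x d 0 0 = x := by simp [matC]
      have hev : ∀ f : ℂ[X], aeval x f = Ideal.Quotient.mk (Ideal.span {P}) f := by
        intro f
        have := (aeval_algHom_apply (Ideal.Quotient.mkₐ ℂ (Ideal.span {P})) X f)
        rw [aeval_X_left_apply] at this
        exact this
      rw [hΨ, map_add, map_mul, ← aeval_algHom_apply, ← aeval_algHom_apply, hFc, hFa]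
      ext j
      fin_cases j
      · simp [Matrix.mul_apply, Fin.sum_univ_two, aeval_lower hM, hM0, hev, matA, hf]
      · simp [Matrix.mul_apply, Fin.sum_univ_two, aeval_lower hM, hM0, hev, matA, hg]

end FlatOdd

/-- Flatness locus of `Ã₊(2,2,n)` for `n ≥ 3` odd. -/
theorem flatness_tilde_22n_odd (n : ℕ) (hn3 : 3 ≤ n) (hnodd : Odd n)
    (α1 β1 : ℂ) (α2 β2 : ℂ) (γ : ℕ → ℂ)
    (hα2 : α2 ≠ 0) (hβ2 : β2 ≠ 0) (hγn : γ n ≠ 0) :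
    Module.finrank ℂ (Tilde22n.Aplus n α1 α2 β1 β2 γ) = 2 * n ↔
      ((α2 * β2) ^ n * γ n ^ 2 = 1 ∧
       (∀ k : ℕ, 1 ≤ k → k ≤ n - 1 → (α2 * β2) ^ k * γ n * γ k = γ (n - k)) ∧
       α2 ^ ((n - 1) / 2) * β2 ^ ((n + 1) / 2) * γ n * α1 = β1) := by
  obtain ⟨m, hm⟩ := id hnodd
  have hq : α2 * β2 ≠ 0 := mul_ne_zero hα2 hβ2
  have h0 : (FlatOdd.relPoly n γ).coeff 0 ≠ 0 := by
    rw [FlatOdd.relPoly_coeff n γ (Nat.zero_le _), Nat.sub_zero, FlatOdd.gam,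
      if_neg (by omega)]
    exact mul_ne_zero (pow_ne_zero _ (by norm_num)) hγn
  obtain ⟨d, hd⟩ := FlatOdd.exists_inv_X h0
  obtain ⟨w, hw, hiff⟩ := FlatOdd.aeval_matC_eq_zero_iff (FlatOdd.relPoly_natDegree n γ)
    α1 α2 β1 β2 hd
  -- With the convention `γ₀ = 1`, the first two conditions are one palindromic condition; its
  -- cases `k = 0` and `k = n` are trivial and the first condition, respectively.
  have hpal : (∀ k ≤ n, (α2 * β2) ^ k * γ n * FlatOdd.gam γ k = FlatOdd.gam γ (n - k)) ↔
      (α2 * β2) ^ n * γ n ^ 2 = 1 ∧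
       (∀ k : ℕ, 1 ≤ k → k ≤ n - 1 → (α2 * β2) ^ k * γ n * γ k = γ (n - k)) := by
    have hn0 : n ≠ 0 := by omega
    constructor
    · intro h
      refine ⟨?_, fun k h1 h2 => ?_⟩
      · have := h n le_rfl
        simp only [FlatOdd.gam, hn0, if_false, Nat.sub_self, if_true] at this
        rw [← this]; ring
      · have := h k (by omega)
        rwa [FlatOdd.gam, FlatOdd.gam, if_neg (by omega), if_neg (by omega)] at this
    · rintro ⟨h1, h2⟩ k hk
      rcases Nat.eq_zero_or_pos k with rfl | hk0
      · simp [FlatOdd.gam, hn0]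
      rcases hk.eq_or_lt with rfl | hkn
      · simp only [FlatOdd.gam, hn0, if_false, Nat.sub_self, if_true]
        rw [← h1]; ring
      · rw [FlatOdd.gam, FlatOdd.gam, if_neg (by omega), if_neg (by omega)]
        exact h2 k hk0 (by omega)
  rw [FlatOdd.finrank_aplus_iff rfl hα2 hβ2 hd, hiff, FlatOdd.dvd_rev_iff hnodd, ← and_assoc, ← hpal,
    ← FlatOdd.rev_eq_iff hnodd γ hq]
  refine and_congr_right fun hrev => ?_
  have e1 : (n - 1) / 2 = m := by omega
  have e2 : (n + 1) / 2 = m + 1 := by omega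
  rw [hrev] at hw
  rw [e1, e2]
  exact FlatOdd.dvd_iff hm hα2 hβ2 hγn
    (hpal.1 ((FlatOdd.rev_eq_iff hnodd γ hq).1 hrev)).1 hw
end
end
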